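/- arXiv:2310.18202 — 2 statements merged into one kernel-verified Lean document; each statement's English description precedes it below -/
import Mathlib

section
/- Let F be a graph, let C be a cycle of length ℓ ≥ 3, and let σ : C → F be a homomorphism, so that (C, σ) is an F-coloured cycle. Then the following are equivalent: (1) (C, σ) is F-abundant as a coloured graph; (2) for every injection c : V(F) → ℤ, the cycle-equation of C with respect to σ and c is not convex; (3) for every injection c : V(F) → ℤ, the cycle-equation of C with respect to σ and c has genus at least 2. -/
/-- `f` is a copy map from `F` into `G`: an injective map sending edges to edges. -/
def IsCopyMap {α β : Type*} (F : SimpleGraph α) (G : SimpleGraph β) (f : α → β) : Prop :=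
  Function.Injective f ∧ ∀ a b, F.Adj a b → G.Adj (f a) (f b)

/-- `G` is uniformly `ε`-far from `F`-free, with witnessing `F`-partition given by the
homomorphism `π : G →g F` (the parts are `V_i = π⁻¹(i)`): there is a collection `𝒞` of
pairwise edge-disjoint copies of `F` in `G`, each placed so that the vertex playing the
role of `i ∈ V(F)` lies in `V_i`, such that every vertex of `G` lies in at least
`ε·|V(G)|` copies of `F` from `𝒞`. -/
def UniformlyFarWith {α β : Type*} (F : SimpleGraph α) (G : SimpleGraph β)
    (π : G →g F) (ε : ℝ) : Prop :=
  ∃ 𝒞 : Set (α → β),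
    (∀ f ∈ 𝒞, IsCopyMap F G f ∧ ∀ a, π (f a) = a) ∧
    (∀ f ∈ 𝒞, ∀ g ∈ 𝒞, f ≠ g → ∀ a b a' b', F.Adj a b → F.Adj a' b' →
      s(f a, f b) ≠ s(g a', g b')) ∧
    (∀ v : β, ε * (Nat.card β : ℝ) ≤ (({x ∈ 𝒞 | v ∈ Set.range x}).ncard : ℝ))

/-- An `F`-coloured graph `(H, σ)` is `F`-abundant: there are constants `c, C > 0` such
that for every `ε ∈ (0,1)` and all sufficiently large `n`, every `n`-vertex graph `G`
that is uniformly `ε`-far from `F`-free with `F`-partition induced by `π : G →g F`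
contains at least `c·ε^C·n^{|V(H)|}` injective homomorphisms of `H` into `G` mapping
each vertex `v` of `H` into the part `V_{σ(v)}`. -/
def ColouredAbundant {α β : Type*} (F : SimpleGraph α) (H : SimpleGraph β)
    (σ : H →g F) : Prop :=
  ∃ c C : ℝ, 0 < c ∧ 0 < C ∧ ∀ ε : ℝ, 0 < ε → ε < 1 → ∃ n₀ : ℕ, ∀ n : ℕ, n₀ ≤ n →
    ∀ G : SimpleGraph (Fin n), ∀ π : G →g F, UniformlyFarWith F G π ε →
      c * ε ^ C * (n : ℝ) ^ (Nat.card β) ≤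
        (({f : β → Fin n | IsCopyMap H G f ∧ ∀ v, π (f v) = σ v}).ncard : ℝ)


section MyProof
open scoped Fin.NatCast Fin.CommRing

open SimpleGraph in
lemma cyc_adj {ℓ : ℕ} [NeZero ℓ] (hℓ : 3 ≤ ℓ) (i : Fin ℓ) : (cycleGraph ℓ).Adj i (i + 1) := by
  obtain ⟨k, rfl⟩ : ∃ k, ℓ = k + 2 := ⟨ℓ - 2, by omega⟩
  rw [cycleGraph_adj]
  right; simp

open SimpleGraph in
lemma cyc_adj_cases {ℓ : ℕ} [NeZero ℓ] (hℓ : 3 ≤ ℓ) {i j : Fin ℓ} (h : (cycleGraph ℓ).Adj i j) :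
    j = i + 1 ∨ i = j + 1 := by
  obtain ⟨k, rfl⟩ : ∃ k, ℓ = k + 2 := ⟨ℓ - 2, by omega⟩
  rw [cycleGraph_adj] at h
  rcases h with h | h
  · right; rw [← h]; abel
  · left; rw [← h]; abel

lemma fin_add_val {ℓ : ℕ} [NeZero ℓ] (i j : Fin ℓ) : i + (((j - i).val : ℕ) : Fin ℓ) = j := by
  simp

lemma A_pos {α : Type*} (F : SimpleGraph α) (ℓ : ℕ) [NeZero ℓ] (hℓ : 3 ≤ ℓ)
    (σ : SimpleGraph.cycleGraph ℓ →g F) (c : α → ℤ) (hc : Function.Injective c) (j : Fin ℓ) :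
    c (σ (j + 1)) - c (σ j) ≠ 0 := by
  intro h
  have := σ.map_adj (cyc_adj hℓ j)
  exact this.ne (hc (by omega))

lemma A_total {α : Type*} (ℓ : ℕ) [NeZero ℓ] (σ : Fin ℓ → α) (c : α → ℤ) :
    ∑ i, (c (σ (i + 1)) - c (σ i)) = 0 := by
  rw [Finset.sum_sub_distrib, sub_eq_zero]
  exact Equiv.sum_comp (Equiv.addRight (1 : Fin ℓ)) (fun i => c (σ i))

lemma A_conv {α : Type*} [Fintype α] (F : SimpleGraph α) (ℓ : ℕ) [NeZero ℓ] (hℓ : 3 ≤ ℓ)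
    (σ : SimpleGraph.cycleGraph ℓ →g F) (hσ : Function.Injective σ) :
    ∃ c : α → ℤ, Function.Injective c ∧ ∃ i₀ : Fin ℓ, (c (σ (i₀ + 1)) - c (σ i₀) < 0) ∧
          ∀ j : Fin ℓ, j ≠ i₀ → 0 ≤ c (σ (j + 1)) - c (σ j) := by
  classical
  obtain ⟨k, rfl⟩ : ∃ k, ℓ = k + 1 := ⟨ℓ - 1, by omega⟩
  let e := Fintype.equivFin α
  let c : α → ℤ := fun x => if h : ∃ i, σ i = x then ((h.choose : Fin (k+1)).val : ℤ)
    else (k + 1 : ℤ) + (e x).val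
  have c1 : ∀ i, c (σ i) = (i.val : ℤ) := by
    intro i
    have h : ∃ j, σ j = σ i := ⟨i, rfl⟩
    have h2 := hσ h.choose_spec
    simp only [c, dif_pos h, h2]
  refine ⟨c, ?_, Fin.last k, ?_, ?_⟩
  · intro x y hxy
    by_cases hx : ∃ i, σ i = x <;> by_cases hy : ∃ i, σ i = y
    · obtain ⟨i, rfl⟩ := hx
      obtain ⟨j, rfl⟩ := hy
      rw [c1, c1] at hxy
      congr 1; ext; exact_mod_cast hxy
    · obtain ⟨i, rfl⟩ := hx
      rw [c1] at hxy
      simp only [c, dif_neg hy] at hxy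
      omega
    · obtain ⟨i, rfl⟩ := hy
      rw [c1] at hxy
      simp only [c, dif_neg hx] at hxy
      omega
    · simp only [c, dif_neg hx, dif_neg hy] at hxy
      exact e.injective (Fin.ext (by omega))
  · rw [c1, c1]; simp; omega
  · intro j hj
    rw [c1, c1, Fin.val_add_one, if_neg hj]; simp

lemma A_conv_inj {α : Type*} (F : SimpleGraph α) (ℓ : ℕ) [NeZero ℓ] (hℓ : 3 ≤ ℓ)
    (σ : SimpleGraph.cycleGraph ℓ →g F) (c : α → ℤ) (hc : Function.Injective c)
    (h : ∃ i₀ : Fin ℓ, (c (σ (i₀ + 1)) - c (σ i₀) < 0) ∧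
          ∀ j : Fin ℓ, j ≠ i₀ → 0 ≤ c (σ (j + 1)) - c (σ j)) : Function.Injective σ := by
  obtain ⟨i₀, -, h⟩ := h
  have step : ∀ k : ℕ, k + 1 < ℓ → c (σ (i₀ + 1 + (k : Fin ℓ))) < c (σ (i₀ + 1 + ((k + 1 : ℕ) : Fin ℓ))) := by
    intro k hk
    have hne : i₀ + 1 + (k : Fin ℓ) ≠ i₀ := by
      intro h
      have h2 : ((k + 1 : ℕ) : Fin ℓ) = 0 := by
        have : i₀ + ((k + 1 : ℕ) : Fin ℓ) = i₀ + 0 := by rw [add_zero]; convert h using 1; push_cast; abel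
        exact add_left_cancel this
      have h3 := congrArg Fin.val h2
      rw [Fin.val_natCast, Nat.mod_eq_of_lt hk] at h3
      simp at h3
    have h1 := h _ hne
    have h2 := A_pos F ℓ hℓ σ c hc (i₀ + 1 + (k : Fin ℓ))
    have h3 : i₀ + 1 + ((k + 1 : ℕ) : Fin ℓ) = i₀ + 1 + (k : Fin ℓ) + 1 := by push_cast; abel
    rw [h3]; omega
  have mono : ∀ a b : ℕ, a < b → b < ℓ → c (σ (i₀ + 1 + (a : Fin ℓ))) < c (σ (i₀ + 1 + (b : Fin ℓ))) := by
    intro a b hab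
    induction b, hab using Nat.le_induction with
    | base => intro h; exact step a h
    | succ b hb ih => intro h; exact (ih (by omega)).trans (step b h)
  intro x y hxy
  rw [← fin_add_val (i₀ + 1) x, ← fin_add_val (i₀ + 1) y] at hxy ⊢
  set a := (x - (i₀ + 1)).val
  set b := (y - (i₀ + 1)).val
  have ha : a < ℓ := (x - (i₀ + 1)).isLt
  have hb : b < ℓ := (y - (i₀ + 1)).isLt
  rcases lt_trichotomy a b with hlt | heq | hlt
  · have := mono a b hlt hb; rw [hxy] at this; omega
  · rw [heq]
  · have := mono b a hlt ha; rw [hxy] at this; omega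

lemma A_genus {α : Type*} (ℓ : ℕ) [NeZero ℓ]
    (σ : Fin ℓ → α) (c : α → ℤ) (hσ : ¬ Function.Injective σ) :
    ∃ T : Finset (Fin ℓ), T.Nonempty ∧ Tᶜ.Nonempty ∧
          ∑ i ∈ T, (c (σ (i + 1)) - c (σ i)) = 0 ∧
          ∑ i ∈ Tᶜ, (c (σ (i + 1)) - c (σ i)) = 0 := by
  obtain ⟨i, j, hij, hne⟩ : ∃ i j, σ i = σ j ∧ i ≠ j := by
    simpa [Function.Injective] using hσ
  set s := (j - i).val with hs
  have hsl : s < ℓ := (j - i).isLt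
  have hs0 : 0 < s := by
    rcases Nat.eq_zero_or_pos (j - i).val with h | h
    · exfalso; apply hne; have : j - i = 0 := Fin.ext (by simpa using h)
      exact (sub_eq_zero.mp this).symm
    · exact h
  have hT0 : ∑ x ∈ Finset.univ.filter (fun x : Fin ℓ => (x - i).val < s), (c (σ (x + 1)) - c (σ x)) = 0 := by
    have : ∑ x ∈ Finset.univ.filter (fun x : Fin ℓ => (x - i).val < s), (c (σ (x + 1)) - c (σ x))
        = ∑ k ∈ Finset.range s, (c (σ (i + ((k + 1 : ℕ) : Fin ℓ))) - c (σ (i + (k : Fin ℓ)))) := by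
      symm
      apply Finset.sum_bij' (fun (k : ℕ) _ => i + (k : Fin ℓ)) (fun (x : Fin ℓ) _ => (x - i).val)
      · intro k hk
        simp only [Finset.mem_range] at hk
        simp [Nat.mod_eq_of_lt (hk.trans hsl), hk]
      · intro x hx; simpa using hx
      · intro k hk
        simp only [Finset.mem_range] at hk
        simp [Nat.mod_eq_of_lt (hk.trans hsl)]
      · intro x hx; simp
      · intro k hk; congr 3; push_cast; abel
    rw [this, Finset.sum_range_sub (fun k : ℕ => c (σ (i + (k : Fin ℓ))))]
    rw [hs, fin_add_val]; simp [hij]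
  refine ⟨Finset.univ.filter (fun x => (x - i).val < s), ⟨i, by simp [hs0]⟩, ⟨j, by simp [hs]⟩, hT0, ?_⟩
  have := A_total ℓ σ c
  rw [← Finset.sum_add_sum_compl (Finset.univ.filter (fun x : Fin ℓ => (x - i).val < s)), hT0, zero_add] at this
  exact this

lemma A_all {α : Type*} [Fintype α] (F : SimpleGraph α) (ℓ : ℕ) [NeZero ℓ] (hℓ : 3 ≤ ℓ)
    (σ : SimpleGraph.cycleGraph ℓ →g F) :
    ((∀ c : α → ℤ, Function.Injective c →
        ¬ ∃ i₀ : Fin ℓ, (c (σ (i₀ + 1)) - c (σ i₀) < 0) ∧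
          ∀ j : Fin ℓ, j ≠ i₀ → 0 ≤ c (σ (j + 1)) - c (σ j)) ↔ ¬ Function.Injective σ) ∧
    ((∀ c : α → ℤ, Function.Injective c →
        ∃ T : Finset (Fin ℓ), T.Nonempty ∧ Tᶜ.Nonempty ∧
          ∑ i ∈ T, (c (σ (i + 1)) - c (σ i)) = 0 ∧
          ∑ i ∈ Tᶜ, (c (σ (i + 1)) - c (σ i)) = 0) ↔ ¬ Function.Injective σ) := by
  refine ⟨⟨fun h hσ => ?_, fun h c hc h2 => h (A_conv_inj F ℓ hℓ σ c hc h2)⟩,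
    ⟨fun h hσ => ?_, fun h c _ => A_genus ℓ σ c h⟩⟩
  · obtain ⟨c, hc, h2⟩ := A_conv F ℓ hℓ σ hσ
    exact h c hc h2
  · obtain ⟨c, hc, i₀, -, h2⟩ := A_conv F ℓ hℓ σ hσ
    obtain ⟨T, hT, hT', h0, h0'⟩ := h c hc
    have key : ∀ S : Finset (Fin ℓ), S.Nonempty → i₀ ∉ S → ∑ i ∈ S, (c (σ (i + 1)) - c (σ i)) ≠ 0 := by
      intro S hS hi
      apply ne_of_gt
      apply Finset.sum_pos _ hS
      intro j hj
      have h1 := h2 j (fun h => hi (h ▸ hj))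
      have := A_pos F ℓ hℓ σ c hc j
      omega
    by_cases hi : i₀ ∈ T
    · exact key _ hT' (by simpa using hi) h0'
    · exact key _ hT hi h0


lemma B_cs {β X : Type*} [Fintype X] [DecidableEq X] (A : Finset β) (D : β → Finset X) :
    (∑ v ∈ A, ((D v).card : ℝ)) ^ 2 ≤
      (Fintype.card X : ℝ) * ∑ u ∈ A, ∑ v ∈ A, ((D u ∩ D v).card : ℝ) := by
  have h1 : ∑ v ∈ A, ((D v).card : ℝ) = ∑ x : X, ∑ v ∈ A, (if x ∈ D v then (1 : ℝ) else 0) := by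
    rw [Finset.sum_comm]
    refine Finset.sum_congr rfl fun v _ => ?_
    simp
  have h2 : ∑ u ∈ A, ∑ v ∈ A, ((D u ∩ D v).card : ℝ)
      = ∑ x : X, (∑ v ∈ A, (if x ∈ D v then (1 : ℝ) else 0)) ^ 2 := by
    simp_rw [sq, Finset.sum_mul_sum]
    rw [Finset.sum_comm]
    rw [Finset.sum_comm]
    symm
    rw [Finset.sum_comm]
    refine Finset.sum_congr rfl fun u _ => ?_
    rw [Finset.sum_comm]
    refine Finset.sum_congr rfl fun v _ => ?_
    have : ∀ x : X, (if x ∈ D u then (1 : ℝ) else 0) * (if x ∈ D v then (1 : ℝ) else 0)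
        = if x ∈ D u ∩ D v then 1 else 0 := by
      intro x
      by_cases h1 : x ∈ D u <;> by_cases h2 : x ∈ D v <;> simp [h1, h2]
    simp_rw [this]
    rw [Finset.sum_ite_mem, Finset.univ_inter]
    simp
  rw [h1, h2]
  have := sq_sum_le_card_mul_sum_sq (s := (Finset.univ : Finset X))
    (f := fun x => ∑ v ∈ A, (if x ∈ D v then (1 : ℝ) else 0))
  simpa using this

open Classical in
lemma B_pairs {β : Type*} [Fintype β] (A : Finset β) (D1 D2 : β → Finset β) (ε t : ℝ)
    (hε : 0 < ε) (hn : 0 < Fintype.card β) (ht : 0 ≤ t)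
    (hA : ε * Fintype.card β ≤ A.card)
    (h1 : ∀ v ∈ A, ε * Fintype.card β ≤ (D1 v).card)
    (h2 : ∀ v ∈ A, ε * Fintype.card β ≤ (D2 v).card) :
    (ε ^ 6 - t) * (Fintype.card β : ℝ) ^ 2 ≤
      (((A ×ˢ A).filter (fun z => t * Fintype.card β ≤ ((D1 z.1 ∩ D1 z.2).card : ℝ) ∧
        t * Fintype.card β ≤ ((D2 z.1 ∩ D2 z.2).card : ℝ))).card : ℝ) := by
  set n : ℝ := (Fintype.card β : ℝ) with hn'
  have hn0 : 0 < n := by rw [hn']; exact_mod_cast hn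
  set Gd := (A ×ˢ A).filter (fun z => t * n ≤ ((D1 z.1 ∩ D1 z.2).card : ℝ) ∧
        t * n ≤ ((D2 z.1 ∩ D2 z.2).card : ℝ)) with hGd
  have hcs := B_cs A (fun v => D1 v ×ˢ D2 v)
  have hcard : ∀ S : Finset β, (S.card : ℝ) ≤ n := fun S => by
    rw [hn']; exact_mod_cast Finset.card_le_univ S
  have hl : ε ^ 3 * n ^ 3 ≤ ∑ v ∈ A, ((D1 v ×ˢ D2 v).card : ℝ) := by
    calc ε ^ 3 * n ^ 3 = (ε * n) * ((ε * n) * (ε * n)) := by ring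
      _ ≤ A.card * ((ε * n) * (ε * n)) := by gcongr
      _ = ∑ v ∈ A, (ε * n) * (ε * n) := by simp
      _ ≤ _ := by
        apply Finset.sum_le_sum
        intro v hv
        rw [Finset.card_product]; push_cast
        exact mul_le_mul (h1 v hv) (h2 v hv) (by positivity) (by positivity)
  have hu : ∑ u ∈ A, ∑ v ∈ A, (((D1 u ×ˢ D2 u) ∩ (D1 v ×ˢ D2 v)).card : ℝ) ≤
      Gd.card * n ^ 2 + n ^ 2 * (t * n * n) := by
    rw [← Finset.sum_product']
    have : ∀ z ∈ A ×ˢ A, (((D1 z.1 ×ˢ D2 z.1) ∩ (D1 z.2 ×ˢ D2 z.2)).card : ℝ) ≤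
        (if z ∈ Gd then n ^ 2 else 0) + t * n * n := by
      intro z hz
      rw [Finset.product_inter_product, Finset.card_product]; push_cast
      have e1 := hcard (D1 z.1 ∩ D1 z.2)
      have e2 := hcard (D2 z.1 ∩ D2 z.2)
      have p1 : (0 : ℝ) ≤ ((D1 z.1 ∩ D1 z.2).card : ℝ) := by positivity
      have p2 : (0 : ℝ) ≤ ((D2 z.1 ∩ D2 z.2).card : ℝ) := by positivity
      have p3 : 0 ≤ t * n * n := by positivity
      split_ifs with h
      · nlinarith [mul_le_mul e1 e2 p2 hn0.le]
      · have : ¬ (t * n ≤ ((D1 z.1 ∩ D1 z.2).card : ℝ) ∧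
          t * n ≤ ((D2 z.1 ∩ D2 z.2).card : ℝ)) := fun h' => h (by
            rw [hGd, Finset.mem_filter]; exact ⟨hz, h'⟩)
        rw [not_and_or, not_le, not_le] at this
        have p4 : 0 ≤ t * n := by positivity
        rcases this with h | h
        · have := mul_le_mul h.le e2 p2 p4
          linarith
        · have := mul_le_mul e1 h.le p2 hn0.le
          nlinarith
    refine (Finset.sum_le_sum this).trans ?_
    rw [Finset.sum_add_distrib, Finset.sum_const, Finset.card_product, nsmul_eq_mul]
    push_cast
    gcongr
    · rw [← Finset.sum_filter, Finset.sum_const, nsmul_eq_mul]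
      gcongr
      exact fun x hx => (Finset.mem_filter.mp hx).2
    · rw [sq]
      have := hcard A
      gcongr
  have hX : (Fintype.card (β × β) : ℝ) = n ^ 2 := by rw [Fintype.card_prod]; push_cast; rw [sq]
  rw [hX] at hcs
  have hsq : (ε ^ 3 * n ^ 3) ^ 2 ≤ n ^ 2 * (Gd.card * n ^ 2 + n ^ 2 * (t * n * n)) := by
    calc _ ≤ (∑ v ∈ A, ((D1 v ×ˢ D2 v).card : ℝ)) ^ 2 := by gcongr
      _ ≤ _ := hcs
      _ ≤ _ := by gcongr
  have h4 : 0 < n ^ 4 := by positivity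
  refine le_of_mul_le_mul_left ?_ h4
  nlinarith [hsq]

open Classical in
noncomputable def Rset {α β : Type*} [Fintype β] (G : SimpleGraph β) (π : β → α) (p : ℕ → α)
    (τ : ℝ) (C : Finset β) : ℕ → Finset β
  | 0 => C
  | k + 1 => Finset.univ.filter (fun x => π x = p (k + 1) ∧
      τ ≤ (((Rset G π p τ C k).filter (fun y => G.Adj x y)).card : ℝ))

lemma Rset_col {α β : Type*} [Fintype β] (G : SimpleGraph β) (π : β → α) (p : ℕ → α)
    (τ : ℝ) (C : Finset β) (hC : ∀ x ∈ C, π x = p 0) (k : ℕ) :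
    ∀ x ∈ Rset G π p τ C k, π x = p k := by
  cases k with
  | zero => exact hC
  | succ k =>
    intro x hx
    simp only [Rset, Finset.mem_filter] at hx
    exact hx.2.1

open Classical in
lemma B_loss {α β : Type*} [Fintype β] (F : SimpleGraph α) (G : SimpleGraph β) (π : β → α)
    (Cs : Finset (α → β)) (hπ : ∀ f ∈ Cs, ∀ a, π (f a) = a)
    (hadj : ∀ f ∈ Cs, ∀ a b, F.Adj a b → G.Adj (f a) (f b))
    (hdis : ∀ f ∈ Cs, ∀ g ∈ Cs, ∀ a b, F.Adj a b → f a = g a → f b = g b → f = g)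
    (p : ℕ → α) (hp : ∀ k, F.Adj (p k) (p (k + 1))) (τ : ℝ) (hτ : 0 ≤ τ)
    (C : Finset β) (k : ℕ) :
    ((Cs.filter (fun f => f (p 0) ∈ C ∧ f (p k) ∉ Rset G π p τ C k)).card : ℝ) ≤
      k * (Fintype.card β * τ) := by
  induction k with
  | zero => 
    have : Cs.filter (fun f => f (p 0) ∈ C ∧ f (p 0) ∉ Rset G π p τ C 0) = ∅ := by
      apply Finset.filter_false_of_mem
      intro f _ h
      exact h.2 h.1
    rw [this]; simp
  | succ k ih =>
    set B := Cs.filter (fun f => f (p k) ∈ Rset G π p τ C k ∧ f (p (k+1)) ∉ Rset G π p τ C (k+1)) with hB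
    have hBc : (B.card : ℝ) ≤ Fintype.card β * τ := by
      rw [Finset.card_eq_sum_card_fiberwise (f := fun f => f (p (k+1))) (t := Finset.univ) (by intro x _; simp)]
      push_cast
      have : ∀ x ∈ (Finset.univ : Finset β), ((B.filter (fun f => f (p (k+1)) = x)).card : ℝ) ≤ τ := by
        intro x _
        by_cases hne : (B.filter (fun f => f (p (k+1)) = x)).Nonempty
        · obtain ⟨f0, hf0⟩ := hne
          simp only [hB, Finset.mem_filter] at hf0
          have hx : x ∉ Rset G π p τ C (k+1) := by rw [← hf0.2]; exact hf0.1.2.2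
          have hπx : π x = p (k+1) := by rw [← hf0.2]; exact hπ _ hf0.1.1 _
          have hlt : (((Rset G π p τ C k).filter (fun y => G.Adj x y)).card : ℝ) < τ := by
            by_contra h
            apply hx
            simp only [Rset, Finset.mem_filter, Finset.mem_univ, true_and]
            exact ⟨hπx, not_lt.mp h⟩
          refine le_trans ?_ hlt.le
          norm_cast
          apply Finset.card_le_card_of_injOn (fun f => f (p k))
          · intro f hf
            simp only [hB, Finset.coe_filter, Finset.mem_filter, Set.mem_ofPred_eq] at hf ⊢
            refine ⟨hf.1.2.1, ?_⟩
            rw [← hf.2]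
            exact (hadj f hf.1.1 _ _ (hp k)).symm
          · intro f hf g hg hfg
            simp only [hB, Finset.coe_filter, Finset.mem_filter, Set.mem_ofPred_eq] at hf hg
            exact hdis f hf.1.1 g hg.1.1 _ _ (hp k) hfg (hf.2.trans hg.2.symm)
        · rw [Finset.not_nonempty_iff_eq_empty] at hne
          rw [hne]; simpa using hτ
      refine (Finset.sum_le_sum this).trans ?_
      simp
    have hsub : Cs.filter (fun f => f (p 0) ∈ C ∧ f (p (k+1)) ∉ Rset G π p τ C (k+1)) ⊆
        Cs.filter (fun f => f (p 0) ∈ C ∧ f (p k) ∉ Rset G π p τ C k) ∪ B := by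
      intro f hf
      simp only [hB, Finset.mem_union, Finset.mem_filter] at hf ⊢
      tauto
    have h1 : ((Cs.filter (fun f => f (p 0) ∈ C ∧ f (p (k+1)) ∉ Rset G π p τ C (k+1))).card : ℝ) ≤
       (Cs.filter (fun f => f (p 0) ∈ C ∧ f (p k) ∉ Rset G π p τ C k)).card + B.card := by
      exact_mod_cast (Finset.card_le_card hsub).trans (Finset.card_union_le _ _)
    push_cast
    linarith

open Classical in
lemma B_U {α β : Type*} [Fintype β] (F : SimpleGraph α) (G : SimpleGraph β) (π : β → α)
    (Cs : Finset (α → β)) (hπ : ∀ f ∈ Cs, ∀ a, π (f a) = a)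
    (hadj : ∀ f ∈ Cs, ∀ a b, F.Adj a b → G.Adj (f a) (f b))
    (hdis : ∀ f ∈ Cs, ∀ g ∈ Cs, ∀ a b, F.Adj a b → f a = g a → f b = g b → f = g)
    (p : ℕ → α) (hp : ∀ k, F.Adj (p k) (p (k + 1))) (τ : ℝ) (hτ : 0 ≤ τ)
    (C : Finset β) (K : ℕ) (U : Finset β) (d : ℝ)
    (hU : ∀ u ∈ U, d ≤ (((((Cs.filter (fun f => f (p K) = u)).image (fun f => f (p 0))) ∩ C).card : ℕ) : ℝ)) :
    ((U.filter (fun u => u ∉ Rset G π p τ C K)).card : ℝ) * d ≤ K * (Fintype.card β * τ) := by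
  refine le_trans ?_ (B_loss F G π Cs hπ hadj hdis p hp τ hτ C K)
  set Q := Cs.filter (fun f => f (p 0) ∈ C ∧ f (p K) ∉ Rset G π p τ C K) with hQ
  set W := U.filter (fun u => u ∉ Rset G π p τ C K) with hW
  calc (W.card : ℝ) * d = ∑ u ∈ W, d := by simp
    _ ≤ ∑ u ∈ W, ((Q.filter (fun f => f (p K) = u)).card : ℝ) := by
      apply Finset.sum_le_sum
      intro u hu
      rw [hW, Finset.mem_filter] at hu
      refine (hU u hu.1).trans ?_
      norm_cast
      refine le_trans (Finset.card_le_card ?_) (Finset.card_image_le (f := fun f => f (p 0)))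
      intro y hy
      simp only [hQ, Finset.mem_inter, Finset.mem_image, Finset.mem_filter] at hy ⊢
      obtain ⟨⟨f, ⟨hf, hfu⟩, rfl⟩, hyC⟩ := hy
      exact ⟨f, ⟨⟨hf, hyC, by rw [hfu]; exact hu.2⟩, hfu⟩, rfl⟩
    _ ≤ _ := by
      norm_cast
      have : ∑ u ∈ W, (Q.filter (fun f => f (p K) = u)).card
          = (W.biUnion (fun u => Q.filter (fun f => f (p K) = u))).card := by
        rw [Finset.card_biUnion]
        intro x _ y _ hxy
        rw [Function.onFun, Finset.disjoint_left]
        intro f hf hg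
        simp only [Finset.mem_filter] at hf hg
        exact hxy (hf.2.symm.trans hg.2)
      rw [this]
      apply Finset.card_le_card
      intro f hf
      simp only [Finset.mem_biUnion, Finset.mem_filter] at hf
      obtain ⟨_, _, h, _⟩ := hf
      exact h

lemma B_steps {α β : Type*} [Fintype β] (G : SimpleGraph β) (π : β → α) (p : ℕ → α)
    (τ : ℝ) (C : Finset β) : ∃ step : ℕ → β → Fin ⌈τ⌉₊ → β,
      ∀ k x, x ∈ Rset G π p τ C (k + 1) → Function.Injective (step k x) ∧
        ∀ j, step k x j ∈ Rset G π p τ C k ∧ G.Adj x (step k x j) := by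
  classical
  have : ∀ k x, ∃ s : Fin ⌈τ⌉₊ → β, x ∈ Rset G π p τ C (k + 1) → Function.Injective s ∧
        ∀ j, s j ∈ Rset G π p τ C k ∧ G.Adj x (s j) := by
    intro k x
    by_cases hx : x ∈ Rset G π p τ C (k + 1)
    · have h2 := hx
      simp only [Rset, Finset.mem_filter] at h2
      have h3 := Nat.ceil_le.mpr h2.2.2
      set N := (Rset G π p τ C k).filter (fun y => G.Adj x y) with hN
      let e := N.equivFin.symm
      refine ⟨fun j => (e (Fin.castLE (by convert h3) j)).1, fun _ => ⟨?_, ?_⟩⟩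
      · intro a b hab
        have := e.injective (Subtype.ext hab)
        exact Fin.castLE_injective _ this
      · intro j
        have := (e (Fin.castLE (by convert h3) j)).2
        exact Finset.mem_filter.mp this
    · exact ⟨fun _ => x, fun h => absurd h hx⟩
  choose s hs using this
  exact ⟨s, hs⟩

lemma B_h {β : Type*} {m : ℕ} (R : ℕ → Finset β) (step : ℕ → β → Fin m → β)
    (hs : ∀ k x, x ∈ R (k + 1) → ∀ j, step k x j ∈ R k) (t : ℕ → Fin m) (K : ℕ) :
    ∀ u ∈ R K, ∃ h : ℕ → β, h K = u ∧ (∀ k ≤ K, h k ∈ R k) ∧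
      ∀ k < K, h k = step k (h (k + 1)) (t k) := by
  induction K with
  | zero => intro u hu; exact ⟨fun _ => u, rfl, fun k hk => by
      obtain rfl : k = 0 := by omega
      exact hu, fun k hk => by omega⟩
  | succ K ih =>
    intro u hu
    obtain ⟨h, h1, h2, h3⟩ := ih (step K u (t K)) (hs K u hu _)
    refine ⟨Function.update h (K + 1) u, by simp, ?_, ?_⟩
    · intro k hk
      by_cases hk' : k = K + 1
      · subst hk'; simpa using hu
      · rw [Function.update_of_ne hk']; exact h2 k (by omega)
    · intro k hk
      rw [Function.update_of_ne (by omega)]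
      by_cases hk' : k = K
      · subst hk'; simp [h1]
      · rw [Function.update_of_ne (by omega)]; exact h3 k (by omega)


lemma B_cyc {β : Type*} (G : SimpleGraph β) (L : ℕ) (g : ℕ → β)
    (h1 : ∀ r < L, G.Adj (g r) (g (r + 1))) (h2 : G.Adj (g L) (g 0)) (i x : Fin (L + 1)) :
    G.Adj (g (x - i).val) (g (x + 1 - i).val) := by
  have : x + 1 - i = (x - i) + 1 := by abel
  rw [this, Fin.val_add_one]
  split_ifs with h
  · rw [h]; simpa using h2
  · apply h1
    have := (x - i).isLt
    have h3 : (x - i).val ≠ L := fun h' => h (Fin.ext (by simpa using h'))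
    omega

lemma B_count {α β : Type*} [Fintype β] (G : SimpleGraph β) (π : β → α) (L : ℕ)
    (σ : Fin (L + 1) → α) (i j : Fin (L + 1)) (hij : i ≠ j) (τ : ℝ)
    (D1 D2 : β → Finset β)
    (hD1 : ∀ v, ∀ x ∈ D1 v, G.Adj v x ∧ π x = σ (i + 1))
    (hD2 : ∀ v, ∀ x ∈ D2 v, G.Adj v x ∧ π x = σ (i - 1))
    (p q : ℕ → α) (hp : ∀ k : ℕ, p k = σ (i + ((k + 1 : ℕ) : Fin (L + 1))))
    (hq : ∀ k : ℕ, q k = σ (i - ((k + 1 : ℕ) : Fin (L + 1))))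
    (W : Finset (β × β))
    (hW0 : ∀ z ∈ W, π z.1 = σ i)
    (hW1 : ∀ z ∈ W, z.2 ∈ Rset G π p τ (D1 z.1) ((j - i).val - 1))
    (hW2 : ∀ z ∈ W, z.2 ∈ Rset G π q τ (D2 z.1) (L - (j - i).val)) :
    W.card * ⌈τ⌉₊ ^ (L + 1) ≤
      ({f : Fin (L + 1) → β | (∀ x, G.Adj (f x) (f (x + 1))) ∧ ∀ x, π (f x) = σ x}).ncard
        * ⌈τ⌉₊ ^ 2 := by
  classical
  set m := ⌈τ⌉₊
  set s := (j - i).val with hs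
  have hsL : s < L + 1 := (j - i).isLt
  have hs0 : 0 < s := by
    rcases Nat.eq_zero_or_pos s with h | h
    · exfalso; apply hij; have : j - i = 0 := Fin.ext (by rw [← hs, h]; simp)
      exact (sub_eq_zero.mp this).symm
    · exact h
  choose st1 hst1 using fun v => B_steps G π p τ (D1 v)
  choose st2 hst2 using fun v => B_steps G π q τ (D2 v)
  have e1 : ∀ (z : β × β) (t : Fin (L+1) → Fin m), ∃ h : ℕ → β, z ∈ W → (h (s - 1) = z.2 ∧
      (∀ k ≤ s - 1, h k ∈ Rset G π p τ (D1 z.1) k) ∧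
      ∀ k < s - 1, h k = st1 z.1 k (h (k + 1)) (t (i + ((k + 1 : ℕ) : Fin (L + 1))))) := by
    intro z t
    by_cases hz : z ∈ W
    · obtain ⟨h, h'⟩ := B_h (Rset G π p τ (D1 z.1)) (st1 z.1) (fun k x hx j => ((hst1 z.1 k x hx).2 j).1)
        (fun k => t (i + ((k + 1 : ℕ) : Fin (L + 1)))) (s - 1) z.2 (hW1 z hz)
      exact ⟨h, fun _ => h'⟩
    · exact ⟨fun _ => z.1, fun h => absurd h hz⟩
  have e2 : ∀ (z : β × β) (t : Fin (L+1) → Fin m), ∃ h : ℕ → β, z ∈ W → (h (L - s) = z.2 ∧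
      (∀ k ≤ L - s, h k ∈ Rset G π q τ (D2 z.1) k) ∧
      ∀ k < L - s, h k = st2 z.1 k (h (k + 1)) (t (i - ((k + 1 : ℕ) : Fin (L + 1))))) := by
    intro z t
    by_cases hz : z ∈ W
    · obtain ⟨h, h'⟩ := B_h (Rset G π q τ (D2 z.1)) (st2 z.1) (fun k x hx j => ((hst2 z.1 k x hx).2 j).1)
        (fun k => t (i - ((k + 1 : ℕ) : Fin (L + 1)))) (L - s) z.2 (hW2 z hz)
      exact ⟨h, fun _ => h'⟩
    · exact ⟨fun _ => z.1, fun h => absurd h hz⟩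
  choose H1 hH1 using e1
  choose H2 hH2 using e2
  let g : (β × β) → (Fin (L+1) → Fin m) → ℕ → β := fun z t r =>
    if r = 0 then z.1 else if r ≤ s then H1 z t (r - 1) else H2 z t (L - r)
  have g0 : ∀ z t, g z t 0 = z.1 := fun z t => by simp [g]
  have g1 : ∀ z t r, 1 ≤ r → r ≤ s → g z t r = H1 z t (r - 1) := fun z t r h1 h2 => by
    simp only [g]; rw [if_neg (by omega), if_pos h2]
  have g2 : ∀ z t r, z ∈ W → s ≤ r → g z t r = H2 z t (L - r) := fun z t r hz h1 => by
    simp only [g]; rw [if_neg (by omega)]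
    split_ifs with h2
    · obtain rfl : r = s := by omega
      rw [(hH1 z t hz).1, (hH2 z t hz).1]
    · rfl
  have gs : ∀ z t, z ∈ W → g z t s = z.2 := fun z t hz => by
    rw [g1 z t s hs0 le_rfl, (hH1 z t hz).1]
  have adj1 : ∀ z t, z ∈ W → ∀ k < s - 1, G.Adj (H1 z t k) (H1 z t (k + 1)) := by
    intro z t hz k hk
    obtain ⟨-, h2, h3⟩ := hH1 z t hz
    rw [h3 k hk]
    exact ((hst1 z.1 k _ (h2 (k + 1) (by omega))).2 _).2.symm
  have adj2 : ∀ z t, z ∈ W → ∀ k < L - s, G.Adj (H2 z t k) (H2 z t (k + 1)) := by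
    intro z t hz k hk
    obtain ⟨-, h2, h3⟩ := hH2 z t hz
    rw [h3 k hk]
    exact ((hst2 z.1 k _ (h2 (k + 1) (by omega))).2 _).2.symm
  have col1 : ∀ z t, z ∈ W → ∀ k ≤ s - 1, π (H1 z t k) = p k := by
    intro z t hz k hk
    exact Rset_col G π p τ (D1 z.1) (fun x hx => by rw [(hD1 _ x hx).2, hp]; simp) k _ ((hH1 z t hz).2.1 k hk)
  have col2 : ∀ z t, z ∈ W → ∀ k ≤ L - s, π (H2 z t k) = q k := by
    intro z t hz k hk
    exact Rset_col G π q τ (D2 z.1) (fun x hx => by rw [(hD2 _ x hx).2, hq]; simp) k _ ((hH2 z t hz).2.1 k hk)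
  have gadj : ∀ z t, z ∈ W → ∀ r < L, G.Adj (g z t r) (g z t (r + 1)) := by
    intro z t hz r hr
    rcases Nat.eq_zero_or_pos r with rfl | hr0
    · rw [g0, g1 z t _ (by omega) (by omega)]
      exact (hD1 _ _ ((hH1 z t hz).2.1 0 (by omega))).1
    · by_cases hrs : r < s
      · rw [g1 z t _ (by omega) (by omega), g1 z t _ (by omega) (by omega)]
        have := adj1 z t hz (r - 1) (by omega)
        rwa [show r - 1 + 1 = r by omega] at this
      · rw [g2 z t _ hz (by omega), g2 z t _ hz (by omega)]
        have := adj2 z t hz (L - (r + 1)) (by omega)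
        rw [show L - (r + 1) + 1 = L - r by omega] at this
        exact this.symm
  have gadjL : ∀ z t, z ∈ W → G.Adj (g z t L) (g z t 0) := by
    intro z t hz
    rw [g0, g2 z t _ hz (by omega), Nat.sub_self]
    exact (hD2 _ _ ((hH2 z t hz).2.1 0 (by omega))).1.symm
  have castsub : ∀ r : ℕ, r ≤ L → i - ((L - r + 1 : ℕ) : Fin (L + 1)) = i + (r : Fin (L + 1)) := by
    intro r hr
    have : ((L - r + 1 : ℕ) : Fin (L + 1)) + (r : Fin (L + 1)) = 0 := by
      rw [← Nat.cast_add, show L - r + 1 + r = L + 1 by omega]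
      exact Fin.natCast_self _
    have h3 : ((L - r + 1 : ℕ) : Fin (L + 1)) = - (r : Fin (L + 1)) := eq_neg_of_add_eq_zero_left this
    rw [h3, sub_neg_eq_add]
  have gcol : ∀ z t, z ∈ W → ∀ r ≤ L, π (g z t r) = σ (i + (r : Fin (L + 1))) := by
    intro z t hz r hr
    rcases Nat.eq_zero_or_pos r with rfl | hr0
    · rw [g0, hW0 z hz]; simp
    · by_cases hrs : r < s
      · rw [g1 z t _ (by omega) (by omega), col1 z t hz _ (by omega), hp, show r - 1 + 1 = r by omega]
      · rw [g2 z t _ hz (by omega), col2 z t hz _ (by omega), hq, castsub r hr]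
  set Hom := {f : Fin (L + 1) → β | (∀ x, G.Adj (f x) (f (x + 1))) ∧ ∀ x, π (f x) = σ x} with hHom
  have hfin : Hom.Finite := Set.toFinite _
  let Φ : (β × β) × (Fin (L+1) → Fin m) → (Fin (L+1) → β) × (Fin 2 → Fin m) := fun w =>
    (fun x => g w.1 w.2 (x - i).val, ![w.2 i, w.2 j])
  have key : (W ×ˢ (Finset.univ : Finset (Fin (L+1) → Fin m))).card ≤
      (hfin.toFinset ×ˢ (Finset.univ : Finset (Fin 2 → Fin m))).card := by
    apply Finset.card_le_card_of_injOn Φ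
    · rintro ⟨z, t⟩ hzt
      have hz : z ∈ W := by simpa using hzt
      simp only [Finset.coe_product, Set.mem_prod, Finset.mem_coe, Set.Finite.mem_toFinset, Finset.mem_univ, and_true, Φ]
      refine ⟨fun x => ?_, fun x => ?_⟩
      · exact B_cyc G L (g z t) (gadj z t hz) (gadjL z t hz) i x
      · rw [gcol z t hz _ (by have := (x - i).isLt; omega), fin_add_val]
    · rintro ⟨z, t⟩ hzt ⟨z', t'⟩ hzt' heq
      have hz : z ∈ W := by simpa using hzt
      have hz' : z' ∈ W := by simpa using hzt'
      simp only [Φ, Prod.mk.injEq] at heq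
      obtain ⟨hf, ht⟩ := heq
      have hti : t i = t' i := by simpa using congrFun ht 0
      have htj : t j = t' j := by simpa using congrFun ht 1
      have hg : ∀ r ≤ L, g z t r = g z' t' r := by
        intro r hr
        have := congrFun hf (i + (r : Fin (L+1)))
        simp only [add_sub_cancel_left, Fin.val_natCast] at this
        rwa [Nat.mod_eq_of_lt (by omega)] at this
      have hzz : z = z' := by
        apply Prod.ext
        · have := hg 0 (by omega); rwa [g0, g0] at this
        · have := hg s (by omega); rwa [gs z t hz, gs z' t' hz'] at this
      subst hzz
      refine Prod.ext rfl (funext fun x => ?_)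
      set r := (x - i).val with hr
      have hrL : r < L + 1 := (x - i).isLt
      have hx : x = i + (r : Fin (L+1)) := (fin_add_val i x).symm
      rcases Nat.eq_zero_or_pos r with h0 | hr0
      · rw [h0] at hx; simp at hx; rw [hx]; exact hti
      rcases lt_trichotomy r s with hlt | heq | hgt
      · have h1 := hg r (by omega)
        rw [g1 z t _ hr0 hlt.le, g1 z t' _ hr0 hlt.le, (hH1 z t hz).2.2 _ (by omega),
          (hH1 z t' hz).2.2 _ (by omega)] at h1
        have h2 := hg (r + 1) (by omega)
        rw [g1 z t _ (by omega) (by omega), g1 z t' _ (by omega) (by omega)] at h2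
        simp only [show r - 1 + 1 = r by omega, show r + 1 - 1 = r by omega] at h1 h2
        rw [h2] at h1
        have h3 := (hH1 z t' hz).2.1 r (by omega)
        have h4 := (hst1 z.1 (r - 1) (H1 z t' r) (by rwa [show r - 1 + 1 = r by omega])).1 h1
        rw [hx]; exact h4
      · have : x = j := by rw [hx, heq, hs, fin_add_val]
        rw [this]; exact htj
      · have h1 := hg r (by omega)
        rw [g2 z t _ hz hgt.le, g2 z t' _ hz hgt.le, (hH2 z t hz).2.2 _ (by omega),
          (hH2 z t' hz).2.2 _ (by omega)] at h1
        have h2 := hg (r - 1) (by omega)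
        rw [g2 z t _ hz (by omega), g2 z t' _ hz (by omega)] at h2
        simp only [show L - (r - 1) = L - r + 1 by omega] at h2
        rw [h2, castsub r (by omega)] at h1
        have h3 := (hH2 z t' hz).2.1 (L - r + 1) (by omega)
        have h4 := (hst2 z.1 (L - r) _ h3).1 h1
        rw [hx]; exact h4
  rw [Finset.card_product, Finset.card_product, Finset.card_univ, Finset.card_univ, Fintype.card_fun,
    Fintype.card_fun, Fintype.card_fin, Fintype.card_fin, Fintype.card_fin] at key
  rwa [Set.ncard_eq_toFinset_card _ hfin]


open Classical in
lemma B_homs {α β : Type*} [Fintype α] [Fintype β] [Nonempty β] (F : SimpleGraph α) (G : SimpleGraph β)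
    (π : G →g F) (ε : ℝ) (hε : 0 < ε) (L : ℕ) (hL : 2 ≤ L)
    (σ : SimpleGraph.cycleGraph (L + 1) →g F) (hσ : ¬ Function.Injective σ)
    (h : UniformlyFarWith F G π ε) :
    ε ^ 6 / 4 * (ε ^ 12 / (16 * (L + 1))) ^ (L - 1) * (Fintype.card β : ℝ) ^ (L + 1) ≤
     (({f : Fin (L + 1) → β | (∀ x, G.Adj (f x) (f (x + 1))) ∧ ∀ x, π (f x) = σ x}).ncard : ℝ) := by
  obtain ⟨CC, hcopy, hdisj, hcov⟩ := h
  obtain ⟨i, j, hσij, hij⟩ : ∃ i j, σ i = σ j ∧ i ≠ j := by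
    simpa [Function.Injective] using hσ
  have hfinC : CC.Finite := Set.toFinite _
  set Cs := hfinC.toFinset with hCs
  have memC : ∀ f, f ∈ Cs ↔ f ∈ CC := fun f => by simp [hCs]
  have hπ : ∀ f ∈ Cs, ∀ a, π (f a) = a := fun f hf => (hcopy f ((memC f).1 hf)).2
  have hadj : ∀ f ∈ Cs, ∀ a b, F.Adj a b → G.Adj (f a) (f b) :=
    fun f hf => (hcopy f ((memC f).1 hf)).1.2
  have hdis : ∀ f ∈ Cs, ∀ g ∈ Cs, ∀ a b, F.Adj a b → f a = g a → f b = g b → f = g := by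
    intro f hf g hg a b hab h1 h2
    by_contra hne
    exact hdisj f ((memC f).1 hf) g ((memC g).1 hg) hne a b a b hab hab (by rw [h1, h2])
  set n : ℝ := (Fintype.card β : ℝ) with hn
  have hncard : 0 < Fintype.card β := Fintype.card_pos
  have hn0 : 0 < n := by rw [hn]; exact_mod_cast hncard
  let D : α → α → β → Finset β := fun a b v => (Cs.filter (fun f => f a = v)).image (fun f => f b)
  have hD : ∀ a b v, F.Adj a b → π v = a → ε * n ≤ ((D a b v).card : ℝ) := by
    intro a b v hab hv
    have h1 := hcov v
    rw [Nat.card_eq_fintype_card] at h1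
    refine h1.trans ?_
    norm_cast
    have hinj : Set.InjOn (fun f : α → β => f b) (Cs.filter (fun f => f a = v) : Finset (α → β)) := by
      intro f hf g hg hfg
      simp only [Finset.coe_filter, Set.mem_ofPred_eq] at hf hg
      exact hdis f hf.1 g hg.1 a b hab (hf.2.trans hg.2.symm) hfg
    rw [Finset.card_image_of_injOn hinj, ← Set.ncard_coe_finset]
    apply Set.ncard_le_ncard _ (Finset.finite_toSet _)
    rintro f ⟨hf, a', ha'⟩
    simp only [Finset.coe_filter, Set.mem_ofPred_eq]
    have hf' := (memC f).2 hf
    refine ⟨hf', ?_⟩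
    have : a' = a := by rw [← hv, ← ha', hπ f hf']
    rw [← this]; exact ha'
  set a := σ i with ha
  have hL3 : 3 ≤ L + 1 := by omega
  have hab1 : F.Adj a (σ (i + 1)) := σ.map_adj (cyc_adj hL3 i)
  have hab2 : F.Adj a (σ (i - 1)) := by
    have := σ.map_adj (cyc_adj hL3 (i - 1))
    rw [sub_add_cancel] at this
    exact this.symm
  set A : Finset β := Finset.univ.filter (fun v => π v = a) with hA
  have hAcard : ε * n ≤ (A.card : ℝ) := by
    obtain ⟨w⟩ := ‹Nonempty β›
    have h1 := hcov w
    have h2 : 0 < ({x ∈ CC | w ∈ Set.range x}).ncard := by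
      have : (0 : ℝ) < (({x ∈ CC | w ∈ Set.range x}).ncard : ℝ) := by
        refine lt_of_lt_of_le ?_ h1
        rw [Nat.card_eq_fintype_card]; positivity
      exact_mod_cast this
    obtain ⟨f, hf, -⟩ := Set.nonempty_of_ncard_ne_zero h2.ne'
    have hf' := (memC f).2 hf
    refine (hD (σ (i + 1)) a (f (σ (i + 1))) hab1.symm (hπ f hf' _)).trans ?_
    norm_cast
    apply Finset.card_le_card
    intro y hy
    simp only [D, Finset.mem_image, Finset.mem_filter] at hy
    obtain ⟨g, ⟨hg, -⟩, rfl⟩ := hy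
    simp [hA, hπ g hg]
  set δ := ε ^ 6 / 2 with hδ
  have hδ0 : 0 < δ := by positivity
  set τ := ε ^ 12 / (16 * (L + 1)) * n with hτ
  have hτ0 : 0 < τ := by positivity
  let D1 := D a (σ (i + 1))
  let D2 := D a (σ (i - 1))
  have hpairs := B_pairs A D1 D2 ε δ hε hncard hδ0.le hAcard
    (fun v hv => hD _ _ v hab1 (Finset.mem_filter.mp hv).2)
    (fun v hv => hD _ _ v hab2 (Finset.mem_filter.mp hv).2)
  rw [← hn] at hpairs
  set Gd := (A ×ˢ A).filter (fun z => δ * n ≤ ((D1 z.1 ∩ D1 z.2).card : ℝ) ∧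
        δ * n ≤ ((D2 z.1 ∩ D2 z.2).card : ℝ)) with hGd
  set s := (j - i).val with hs
  have hsL : s < L + 1 := (j - i).isLt
  have hs0 : 0 < s := by
    rcases Nat.eq_zero_or_pos s with h | h
    · exfalso; apply hij; have : j - i = 0 := Fin.ext (by rw [← hs, h]; simp)
      exact (sub_eq_zero.mp this).symm
    · exact h
  let p : ℕ → α := fun k => σ (i + ((k + 1 : ℕ) : Fin (L + 1)))
  let q : ℕ → α := fun k => σ (i - ((k + 1 : ℕ) : Fin (L + 1)))
  have hp : ∀ k, F.Adj (p k) (p (k + 1)) := by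
    intro k
    have := σ.map_adj (cyc_adj hL3 (i + ((k + 1 : ℕ) : Fin (L + 1))))
    convert this using 2
    push_cast; ring
  have hq : ∀ k, F.Adj (q k) (q (k + 1)) := by
    intro k
    have := σ.map_adj (cyc_adj hL3 (i - ((k + 1 + 1 : ℕ) : Fin (L + 1))))
    apply SimpleGraph.Adj.symm
    convert this using 2
    push_cast; ring
  have hp0 : p 0 = σ (i + 1) := by simp [p]
  have hq0 : q 0 = σ (i - 1) := by simp [q]
  have hpK : p (s - 1) = a := by
    simp only [p]; rw [show s - 1 + 1 = s by omega, hs, fin_add_val, ← hσij]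
  have hqK : q (L - s) = a := by
    simp only [q]
    have h1 : ((L - s + 1 : ℕ) : Fin (L + 1)) + (s : Fin (L + 1)) = 0 := by
      rw [← Nat.cast_add, show L - s + 1 + s = L + 1 by omega]
      exact Fin.natCast_self _
    have h3 : ((L - s + 1 : ℕ) : Fin (L + 1)) = - (s : Fin (L + 1)) := eq_neg_of_add_eq_zero_left h1
    rw [h3, sub_neg_eq_add, hs, fin_add_val, ← hσij]
  have hbad : ∀ (r : ℕ → α) (hr : ∀ k, F.Adj (r k) (r (k + 1))) (K : ℕ) (hK : r K = a) (hKL : K ≤ L) (v : β),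
      ((A.filter (fun u => δ * n ≤ ((D a (r 0) u ∩ D a (r 0) v).card : ℝ) ∧
        u ∉ Rset G π r τ (D a (r 0) v) K)).card : ℝ) ≤ ε ^ 6 / 8 * n := by
    intro r hr K hK hKL v
    have := B_U F G π Cs hπ hadj hdis r hr τ hτ0.le (D a (r 0) v) K
      (A.filter (fun u => δ * n ≤ ((D a (r 0) u ∩ D a (r 0) v).card : ℝ))) (δ * n) (by
        intro u hu
        rw [hK]
        exact (Finset.mem_filter.mp hu).2)
    rw [Finset.filter_filter, ← hn] at this
    have hKL' : (K : ℝ) ≤ L + 1 := by exact_mod_cast (by omega : K ≤ L + 1)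
    have hpos : 0 < δ * n := by positivity
    refine le_of_mul_le_mul_right (this.trans ?_) hpos
    calc (K : ℝ) * (n * τ) ≤ (L + 1) * (n * τ) := by gcongr
      _ = ε ^ 6 / 8 * n * (δ * n) := by
        rw [hτ, hδ]; field_simp; norm_num
  set W := Gd.filter (fun z => z.2 ∈ Rset G π p τ (D1 z.1) (s - 1) ∧
    z.2 ∈ Rset G π q τ (D2 z.1) (L - s)) with hW
  have hWcard : ε ^ 6 / 4 * n ^ 2 ≤ (W.card : ℝ) := by
    let B1 : β → Finset β := fun v => A.filter (fun u => δ * n ≤ ((D a (p 0) u ∩ D a (p 0) v).card : ℝ) ∧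
        u ∉ Rset G π p τ (D a (p 0) v) (s - 1))
    let B2 : β → Finset β := fun v => A.filter (fun u => δ * n ≤ ((D a (q 0) u ∩ D a (q 0) v).card : ℝ) ∧
        u ∉ Rset G π q τ (D a (q 0) v) (L - s))
    have hB1 : ∀ v, ((B1 v).card : ℝ) ≤ ε ^ 6 / 8 * n := fun v => hbad p hp (s - 1) hpK (by omega) v
    have hB2 : ∀ v, ((B2 v).card : ℝ) ≤ ε ^ 6 / 8 * n := fun v => hbad q hq (L - s) hqK (by omega) v
    have hsub : Gd ⊆ W ∪ (Finset.univ.biUnion (fun v => (B1 v ∪ B2 v).image (fun u => (v, u)))) := by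
      intro z hz
      rw [Finset.mem_union]
      by_cases hzW : z ∈ W
      · exact Or.inl hzW
      · right
        have hz' := hz
        rw [hGd, Finset.mem_filter, Finset.mem_product] at hz'
        obtain ⟨⟨hz1, hz2⟩, hz3, hz4⟩ := hz'
        rw [hW, Finset.mem_filter] at hzW
        simp only [Finset.mem_biUnion, Finset.mem_univ, true_and, Finset.mem_image]
        refine ⟨z.1, z.2, ?_, rfl⟩
        rw [Finset.mem_union]
        by_cases hR : z.2 ∈ Rset G π p τ (D1 z.1) (s - 1)
        · right
          have hR2 : z.2 ∉ Rset G π q τ (D2 z.1) (L - s) := fun h => hzW ⟨hz, hR, h⟩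
          simp only [B2, Finset.mem_filter]
          rw [hq0]
          exact ⟨hz2, by rw [Finset.inter_comm]; exact hz4, hR2⟩
        · left
          simp only [B1, Finset.mem_filter]
          rw [hp0]
          exact ⟨hz2, by rw [Finset.inter_comm]; exact hz3, hR⟩
    have hc : (Gd.card : ℝ) ≤ W.card + n * (ε ^ 6 / 4 * n) := by
      have h1 : Gd.card ≤ W.card + ∑ v : β, ((B1 v).card + (B2 v).card) := by
        refine (Finset.card_le_card hsub).trans ((Finset.card_union_le _ _).trans ?_)
        gcongr
        refine Finset.card_biUnion_le.trans ?_
        apply Finset.sum_le_sum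
        intro v _
        exact Finset.card_image_le.trans (Finset.card_union_le _ _)
      have h2 : (Gd.card : ℝ) ≤ W.card + ∑ v : β, (((B1 v).card : ℝ) + (B2 v).card) := by
        exact_mod_cast h1
      refine h2.trans ?_
      gcongr
      calc ∑ v : β, (((B1 v).card : ℝ) + (B2 v).card) ≤ ∑ v : β, (ε ^ 6 / 4 * n) := by
            apply Finset.sum_le_sum
            intro v _
            linarith [hB1 v, hB2 v]
        _ = _ := by simp [hn]
    have : (ε ^ 6 - δ) * n ^ 2 ≤ W.card + n * (ε ^ 6 / 4 * n) := hpairs.trans hc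
    rw [hδ] at this
    nlinarith
  have hcount := B_count G π L σ i j hij τ D1 D2
    (by
      intro v x hx
      simp only [D1, D, Finset.mem_image, Finset.mem_filter] at hx
      obtain ⟨f, ⟨hf, rfl⟩, rfl⟩ := hx
      exact ⟨hadj f hf _ _ hab1, hπ f hf _⟩)
    (by
      intro v x hx
      simp only [D2, D, Finset.mem_image, Finset.mem_filter] at hx
      obtain ⟨f, ⟨hf, rfl⟩, rfl⟩ := hx
      exact ⟨hadj f hf _ _ hab2, hπ f hf _⟩)
    p q (fun _ => rfl) (fun _ => rfl) W
    (by
      intro z hz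
      have := (Finset.mem_filter.mp (Finset.mem_filter.mp hz).1).1
      rw [Finset.mem_product] at this
      exact (Finset.mem_filter.mp this.1).2)
    (fun z hz => (Finset.mem_filter.mp hz).2.1) (fun z hz => (Finset.mem_filter.mp hz).2.2)
  set m := ⌈τ⌉₊ with hm
  have hm1 : τ ≤ m := Nat.le_ceil τ
  have hm0 : 0 < m := Nat.ceil_pos.mpr hτ0
  have hcount' : W.card * m ^ (L - 1) ≤ ({f : Fin (L + 1) → β | (∀ x, G.Adj (f x) (f (x + 1))) ∧ ∀ x, π (f x) = σ x}).ncard := by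
    refine Nat.le_of_mul_le_mul_right ?_ (pow_pos hm0 2)
    rw [mul_assoc, ← pow_add, show L - 1 + 2 = L + 1 by omega]
    exact hcount
  have hcount2 : (W.card : ℝ) * (m : ℝ) ^ (L - 1) ≤ (({f : Fin (L + 1) → β | (∀ x, G.Adj (f x) (f (x + 1))) ∧ ∀ x, π (f x) = σ x}).ncard : ℝ) := by
    exact_mod_cast hcount'
  refine le_trans ?_ hcount2
  calc ε ^ 6 / 4 * (ε ^ 12 / (16 * (L + 1))) ^ (L - 1) * n ^ (L + 1)
      = (ε ^ 6 / 4 * n ^ 2) * τ ^ (L - 1) := by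
        have e : n ^ (L + 1) = n ^ (L - 1) * n ^ 2 := by
          rw [← pow_add, show L - 1 + 2 = L + 1 by omega]
        rw [hτ, mul_pow, e]
        ring
    _ ≤ _ := by gcongr

lemma B_noninj {β : Type*} [Fintype β] (L : ℕ) :
    ({f : Fin (L + 1) → β | ¬ Function.Injective f}).ncard ≤ (L + 1) ^ 2 * Fintype.card β ^ L := by
  classical
  have hsub : {f : Fin (L + 1) → β | ¬ Function.Injective f} ⊆
      ((Finset.univ : Finset (Fin (L + 1) × Fin (L + 1))).biUnion
        (fun z => Finset.univ.filter (fun f : Fin (L + 1) → β => z.1 ≠ z.2 ∧ f z.1 = f z.2)) : Finset _) := by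
    intro f hf
    obtain ⟨x, y, hxy, hne⟩ : ∃ x y, f x = f y ∧ x ≠ y := by
      simpa [Function.Injective] using hf
    simp only [Finset.coe_biUnion, Set.mem_iUnion]
    exact ⟨(x, y), by simp, by simp [hxy, hne]⟩
  refine (Set.ncard_le_ncard hsub (Finset.finite_toSet _)).trans ?_
  rw [Set.ncard_coe_finset]
  refine (Finset.card_biUnion_le).trans ?_
  have : ∀ z ∈ (Finset.univ : Finset (Fin (L + 1) × Fin (L + 1))),
      (Finset.univ.filter (fun f : Fin (L + 1) → β => z.1 ≠ z.2 ∧ f z.1 = f z.2)).card ≤ Fintype.card β ^ L := by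
    rintro ⟨x, y⟩ -
    by_cases hne : x = y
    · simp [hne]
    have hc : Fintype.card ({w : Fin (L + 1) // w ≠ x} → β) = Fintype.card β ^ L := by
      rw [Fintype.card_fun]; congr 1; simp
    rw [← hc, ← Finset.card_univ]
    apply Finset.card_le_card_of_injOn (fun f w => f w.1) (by intro f _; simp)
    intro f hf g hg hfg
    simp only [Finset.coe_filter, Set.mem_ofPred_eq] at hf hg
    funext w
    by_cases hw : w = x
    · rw [hw, hf.2.2, hg.2.2]
      exact congrFun hfg ⟨y, fun h => hne h.symm⟩
    · exact congrFun hfg ⟨w, hw⟩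
  refine (Finset.sum_le_sum this).trans ?_
  simp [sq]

lemma B_main {α : Type*} [Fintype α] (F : SimpleGraph α) (ℓ : ℕ) [NeZero ℓ] (hℓ : 3 ≤ ℓ)
    (σ : SimpleGraph.cycleGraph ℓ →g F) (hσ : ¬ Function.Injective σ) :
    ColouredAbundant F (SimpleGraph.cycleGraph ℓ) σ := by
  obtain ⟨L, rfl⟩ : ∃ L, ℓ = L + 1 := ⟨ℓ - 1, by omega⟩
  refine ⟨1 / 8 * (1 / (16 * (L + 1))) ^ (L - 1), ((6 + 12 * (L - 1) : ℕ) : ℝ), by positivity,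
    by positivity, ?_⟩
  intro ε hε hε1
  set κ := 1 / 8 * (1 / (16 * ((L : ℝ) + 1))) ^ (L - 1) * ε ^ (((6 + 12 * (L - 1) : ℕ) : ℝ)) with hκ
  have hκ0 : 0 < κ := by positivity
  refine ⟨⌈((L : ℝ) + 1) ^ 2 / κ⌉₊ + 1, fun n hn G π hfar => ?_⟩
  have hn0 : 0 < n := by omega
  have : Nonempty (Fin n) := ⟨⟨0, hn0⟩⟩
  have h1 := B_homs F G π ε hε L (by omega) σ hσ hfar
  have h2 := B_noninj (β := Fin n) L
  rw [Fintype.card_fin] at h1 h2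
  have hn1 : ((L : ℝ) + 1) ^ 2 ≤ κ * n := by
    have : ((L : ℝ) + 1) ^ 2 / κ ≤ n := (Nat.le_ceil _).trans (Nat.cast_le.mpr (by omega))
    rw [div_le_iff₀ hκ0] at this
    linarith
  have h2' : (({f : Fin (L + 1) → Fin n | ¬ Function.Injective f}).ncard : ℝ) ≤ κ * n ^ (L + 1) := by
    calc _ ≤ ((L : ℝ) + 1) ^ 2 * n ^ L := by exact_mod_cast h2
      _ ≤ κ * n * n ^ L := by gcongr
      _ = _ := by ring
  have h1' : 2 * κ * n ^ (L + 1) ≤ (({f : Fin (L + 1) → Fin n | (∀ x, G.Adj (f x) (f (x + 1))) ∧ ∀ x, π (f x) = σ x}).ncard : ℝ) := by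
    refine le_trans (le_of_eq ?_) h1
    rw [hκ, Real.rpow_natCast, pow_add, pow_mul, div_pow, div_pow]
    ring
  have hsub : {f : Fin (L + 1) → Fin n | (∀ x, G.Adj (f x) (f (x + 1))) ∧ ∀ x, π (f x) = σ x} ⊆
     {f : Fin (L + 1) → Fin n | IsCopyMap (SimpleGraph.cycleGraph (L + 1)) G f ∧ ∀ v, π (f v) = σ v} ∪
     {f : Fin (L + 1) → Fin n | ¬ Function.Injective f} := by
    rintro f ⟨hf1, hf2⟩
    by_cases hf : Function.Injective f
    · left
      refine ⟨⟨hf, fun a b hab => ?_⟩, hf2⟩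
      rcases cyc_adj_cases hℓ hab with rfl | rfl
      · exact hf1 _
      · exact (hf1 _).symm
    · right; exact hf
  have h3 := (Set.ncard_le_ncard hsub (Set.toFinite _)).trans (Set.ncard_union_le _ _)
  have h3' : (({f : Fin (L + 1) → Fin n | (∀ x, G.Adj (f x) (f (x + 1))) ∧ ∀ x, π (f x) = σ x}).ncard : ℝ) ≤
    ({f : Fin (L + 1) → Fin n | IsCopyMap (SimpleGraph.cycleGraph (L + 1)) G f ∧ ∀ v, π (f v) = σ v}).ncard +
     ({f : Fin (L + 1) → Fin n | ¬ Function.Injective f}).ncard := by exact_mod_cast h3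
  rw [Nat.card_eq_fintype_card, Fintype.card_fin]
  linarith


lemma C_far {α V W : Type*} (F : SimpleGraph α) (G : SimpleGraph V) (π : G →g F) (ε : ℝ)
    (e : V ≃ W) (π' : G.comap e.symm →g F) (hπ' : ∀ w, π' w = π (e.symm w))
    (h : UniformlyFarWith F G π ε) : UniformlyFarWith F (G.comap e.symm) π' ε := by
  obtain ⟨CC, h1, h2, h3⟩ := h
  refine ⟨(fun f => e ∘ f) '' CC, ?_, ?_, ?_⟩
  · rintro _ ⟨f, hf, rfl⟩
    obtain ⟨⟨hi, ha⟩, hc⟩ := h1 f hf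
    refine ⟨⟨e.injective.comp hi, fun a b hab => ?_⟩, fun a => ?_⟩
    · simpa using ha a b hab
    · simp [hπ', hc]
  · rintro _ ⟨f, hf, rfl⟩ _ ⟨g, hg, rfl⟩ hne a b a' b' hab hab' heq
    refine h2 f hf g hg (fun h => hne (by rw [h])) a b a' b' hab hab' ?_
    have := congrArg (Sym2.map e.symm) heq
    simpa using this
  · intro w
    have := h3 (e.symm w)
    rw [Nat.card_congr e] at this
    refine this.trans (le_of_eq ?_)
    congr 1
    have : {x ∈ (fun f => e ∘ f) '' CC | w ∈ Set.range x} =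
        (fun f : α → V => e ∘ f) '' {x ∈ CC | e.symm w ∈ Set.range x} := by
      ext g
      constructor
      · rintro ⟨⟨f, hf, rfl⟩, a, ha⟩
        exact ⟨f, ⟨hf, a, by rw [← ha]; simp⟩, rfl⟩
      · rintro ⟨f, ⟨hf, a, ha⟩, rfl⟩
        exact ⟨⟨f, hf, rfl⟩, a, by simp [ha]⟩
    rw [this, Set.ncard_image_of_injective]
    intro f g hfg
    funext a
    exact e.injective (congrFun hfg a)

lemma C_transfer {α β V : Type*} [Finite β] [Fintype V] (F : SimpleGraph α) (H : SimpleGraph β) (σ : H →g F)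
    (X : ℝ) (ε : ℝ) (n : ℕ)
    (h : ∀ G : SimpleGraph (Fin n), ∀ π : G →g F, UniformlyFarWith F G π ε →
      X ≤ (({f : β → Fin n | IsCopyMap H G f ∧ ∀ v, π (f v) = σ v}).ncard : ℝ))
    (hV : Fintype.card V = n) (G : SimpleGraph V) (π : G →g F) (hfar : UniformlyFarWith F G π ε) :
    X ≤ (({f : β → V | (∀ x y, H.Adj x y → G.Adj (f x) (f y)) ∧ ∀ v, π (f v) = σ v}).ncard : ℝ) := by
  let e : V ≃ Fin n := Fintype.equivFinOfCardEq hV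
  let π' : G.comap e.symm →g F := ⟨fun w => π (e.symm w), fun {a b} hab => π.map_adj hab⟩
  refine (h _ π' (C_far F G π ε e π' (fun _ => rfl) hfar)).trans ?_
  norm_cast
  apply Set.ncard_le_ncard_of_injOn (fun f => e.symm ∘ f)
  · rintro f ⟨⟨-, h1⟩, h2⟩
    exact ⟨fun x y hxy => h1 x y hxy, h2⟩
  · intro f _ g _ hfg
    funext a
    exact e.symm.injective (congrFun hfg a)

lemma C_convex {ℓ d : ℕ} (A : Fin ℓ → ℤ) (i₀ : Fin ℓ) (hA : ∀ j, j ≠ i₀ → 0 < A j)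
    (hsum : ∑ j, A j = 0) (x : Fin ℓ → Fin d → ℤ) (R : ℤ) (hR : ∀ j, ∑ i, x j i ^ 2 = R)
    (heq : ∀ i, ∑ j, A j * x j i = 0) : ∀ j, x j = x i₀ := by
  have hz : ∑ j, A j * ∑ i, (x j i - x i₀ i) ^ 2 = 0 := by
    have h1 : ∀ j, A j * ∑ i, (x j i - x i₀ i) ^ 2
        = A j * R + A j * R - 2 * ∑ i, x i₀ i * (A j * x j i) := by
      intro j
      have : ∑ i, (x j i - x i₀ i) ^ 2 = R + R - 2 * ∑ i, x i₀ i * x j i := by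
        have e : ∑ i, (x j i - x i₀ i) ^ 2
            = ∑ i, x j i ^ 2 + ∑ i, x i₀ i ^ 2 - 2 * ∑ i, x i₀ i * x j i := by
          rw [Finset.mul_sum, ← Finset.sum_add_distrib, ← Finset.sum_sub_distrib]
          refine Finset.sum_congr rfl fun i _ => by ring
        rw [e, hR j, hR i₀]
      rw [this, mul_sub, mul_add]
      congr 1
      simp only [Finset.mul_sum]
      refine Finset.sum_congr rfl fun i _ => by ring
    simp_rw [h1]
    rw [Finset.sum_sub_distrib, Finset.sum_add_distrib, ← Finset.sum_mul, hsum, ← Finset.mul_sum,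
      Finset.sum_comm]
    simp_rw [← Finset.mul_sum, heq]
    simp
  have hnn : ∀ j ∈ Finset.univ, 0 ≤ A j * ∑ i, (x j i - x i₀ i) ^ 2 := by
    intro j _
    by_cases hj : j = i₀
    · subst hj; simp
    · exact mul_nonneg (hA j hj).le (Finset.sum_nonneg fun i _ => sq_nonneg _)
  intro j
  by_cases hj : j = i₀
  · rw [hj]
  have h2 := (Finset.sum_eq_zero_iff_of_nonneg hnn).mp hz j (Finset.mem_univ _)
  have h3 : ∑ i, (x j i - x i₀ i) ^ 2 = 0 := by
    rcases mul_eq_zero.mp h2 with h | h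
    · exact absurd h (hA j hj).ne'
    · exact h
  funext i
  have h4 := (Finset.sum_eq_zero_iff_of_nonneg (fun i _ => sq_nonneg _)).mp h3 i (Finset.mem_univ _)
  have := pow_eq_zero_iff (two_ne_zero) |>.mp h4
  omega

lemma C_sphere (d r : ℕ) (hd : 0 < d) (hr : 0 < r) : ∃ (R : ℕ) (S : Finset (Fin d → Fin r)),
    (∀ s ∈ S, ∑ i, (s i).val ^ 2 = R) ∧ r ^ d ≤ S.card * (d * r ^ 2) := by
  classical
  have hmap : ∀ s ∈ (Finset.univ : Finset (Fin d → Fin r)),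
      ∑ i, (s i).val ^ 2 ∈ Finset.range (d * r ^ 2) := by
    intro s _
    rw [Finset.mem_range]
    calc ∑ i, (s i).val ^ 2 < ∑ _i : Fin d, r ^ 2 := by
          apply Finset.sum_lt_sum_of_nonempty
          · exact ⟨⟨0, hd⟩, Finset.mem_univ _⟩
          · intro i _
            exact Nat.pow_lt_pow_left (s i).isLt (by norm_num)
      _ = _ := by simp
  have hne : (Finset.range (d * r ^ 2)).Nonempty := by
    rw [Finset.nonempty_range_iff]; positivity
  by_contra hcon
  push Not at hcon
  have h1 : ∀ R ∈ Finset.range (d * r ^ 2),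
      ((Finset.univ.filter (fun s : Fin d → Fin r => ∑ i, (s i).val ^ 2 = R)).card * (d * r ^ 2)) < r ^ d := by
    intro R _
    exact hcon R _ (fun s hs => (Finset.mem_filter.mp hs).2)
  have h2 := Finset.card_eq_sum_card_fiberwise hmap
  have h3 := Finset.sum_lt_sum_of_nonempty hne h1
  rw [← Finset.sum_mul, ← h2] at h3
  simp at h3
  rw [mul_comm] at h3
  exact lt_irrefl _ h3

lemma zmod_zero {m : ℕ} {z : ℤ} (h : ((z : ℤ) : ZMod m) = 0) (hz : |z| < m) : z = 0 :=
  Int.eq_zero_of_abs_lt_dvd ((ZMod.intCast_zmod_eq_zero_iff_dvd z m).mp h) hz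

def RSgraph {α : Type*} (F : SimpleGraph α) (c : α → ℤ) (d r m t : ℕ) (S : Finset (Fin d → Fin r)) :
    SimpleGraph (α × (Fin d → ZMod m) × ZMod t) where
  Adj x y := F.Adj x.1 y.1 ∧ ∃ s ∈ S, ∀ i, y.2.1 i - x.2.1 i = ((c y.1 - c x.1 : ℤ) : ZMod m) * ((s i).val : ZMod m)
  symm := ⟨by
    rintro x y ⟨h, s, hs, h2⟩
    refine ⟨h.symm, s, hs, fun i => ?_⟩
    have := h2 i
    push_cast at this ⊢
    linear_combination -this⟩
  loopless := ⟨fun x h => h.1.ne rfl⟩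

def RSpi {α : Type*} (F : SimpleGraph α) (c : α → ℤ) (d r m t : ℕ) (S : Finset (Fin d → Fin r)) :
    RSgraph F c d r m t S →g F := ⟨fun x => x.1, fun h => h.1⟩

def RSmap {α : Type*} (c : α → ℤ) {d r : ℕ} (m t : ℕ) (x : Fin d → ZMod m) (s : Fin d → Fin r)
    (y z : ZMod t) : α → (α × (Fin d → ZMod m) × ZMod t) :=
  fun a => (a, fun i => x i + (c a : ZMod m) * ((s i).val : ZMod m), y + (c a : ZMod t) * z)

lemma RS_inj {α : Type*} (c : α → ℤ) (hc : Function.Injective c) (B : ℕ) (hB : ∀ a b, |c a - c b| ≤ B)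
    {d r : ℕ} (m t : ℕ) [Fact t.Prime] (hm : B * r ≤ m) (ht : B < t)
    (x x' : Fin d → ZMod m) (s s' : Fin d → Fin r) (y z y' z' : ZMod t) (a b : α) (hab : a ≠ b)
    (h1 : RSmap c m t x s y z a = RSmap c m t x' s' y' z' a)
    (h2 : RSmap c m t x s y z b = RSmap c m t x' s' y' z' b) :
    x = x' ∧ s = s' ∧ y = y' ∧ z = z' := by
  have hcab : c a - c b ≠ 0 := fun h => hab (hc (by omega))
  simp only [RSmap, Prod.mk.injEq, true_and] at h1 h2
  obtain ⟨h1, h1'⟩ := h1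
  obtain ⟨h2, h2'⟩ := h2
  have hs : s = s' := by
    funext i
    have e1 := congrFun h1 i
    have e2 := congrFun h2 i
    have e3 : (((c a - c b) * ((s i).val - (s' i).val) : ℤ) : ZMod m) = 0 := by
      push_cast
      linear_combination e1 - e2
    have hlt : |(c a - c b) * (((s i).val : ℤ) - (s' i).val)| < m := by
      rw [abs_mul]
      have g1 := hB a b
      have g2 : |((s i).val : ℤ) - (s' i).val| < r := by
        have := (s i).isLt
        have := (s' i).isLt
        rw [abs_lt]; omega
      have g3 : 0 < |c a - c b| := abs_pos.mpr hcab
      calc |c a - c b| * |((s i).val : ℤ) - (s' i).val| < |c a - c b| * r := by gcongr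
        _ ≤ B * r := by gcongr
        _ ≤ m := by exact_mod_cast hm
    have := zmod_zero e3 hlt
    rcases mul_eq_zero.mp this with h | h
    · exact absurd h hcab
    · apply Fin.ext; omega
  have hz : z = z' := by
    have e3 : ((c a - c b : ℤ) : ZMod t) * (z - z') = 0 := by
      push_cast
      linear_combination h1' - h2'
    rcases mul_eq_zero.mp e3 with h | h
    · exact absurd (zmod_zero h (lt_of_le_of_lt (hB a b) (by exact_mod_cast ht))) hcab
    · exact sub_eq_zero.mp h
  subst hs hz
  refine ⟨?_, rfl, by simpa using h1', rfl⟩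
  funext i
  simpa using congrFun h1 i

lemma RS_far {α : Type*} [Fintype α] (F : SimpleGraph α) (c : α → ℤ) (hc : Function.Injective c) (B : ℕ)
    (hB : ∀ a b, |c a - c b| ≤ B) (hα : ∀ a : α, ∃ b, a ≠ b)
    (d r m t : ℕ) [NeZero m] [Fact t.Prime] (hm : B * r ≤ m) (ht : B < t) (S : Finset (Fin d → Fin r)) (ε : ℝ)
    (hε : ε * (Fintype.card α * (m ^ d * t) : ℕ) ≤ S.card * t) :
    UniformlyFarWith F (RSgraph F c d r m t S) (RSpi F c d r m t S) ε := by
  classical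
  have hinj : ∀ a b, a ≠ b → ∀ x x' s s' y z y' z', RSmap c m t x s y z a = RSmap c m t x' s' y' z' a →
     RSmap c m t x s y z b = RSmap c m t x' s' y' z' b → x = x' ∧ s = s' ∧ y = y' ∧ z = z' :=
    fun a b hab x x' s s' y z y' z' h1 h2 => RS_inj (d := d) (r := r) c hc B hB m t hm ht x x' s s' y z y' z' a b hab h1 h2
  refine ⟨{f | ∃ x, ∃ s ∈ S, ∃ y z, f = RSmap c m t x s y z}, ?_, ?_, ?_⟩
  · rintro _ ⟨x, s, hs, y, z, rfl⟩
    refine ⟨⟨fun a b hab => congrArg Prod.fst hab, fun a b hab => ⟨hab, s, hs, fun i => ?_⟩⟩, fun a => rfl⟩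
    simp only [RSmap]
    push_cast
    ring
  · rintro _ ⟨x, s, hs, y, z, rfl⟩ _ ⟨x', s', hs', y', z', rfl⟩ hne a b a' b' hab hab' heq
    apply hne
    have key : RSmap c m t x s y z a = RSmap c m t x' s' y' z' a ∧
       RSmap c m t x s y z b = RSmap c m t x' s' y' z' b := by
      rw [Sym2.eq_iff] at heq
      rcases heq with ⟨h1, h2⟩ | ⟨h1, h2⟩
      · have e1 : a = a' := congrArg Prod.fst h1
        have e2 : b = b' := congrArg Prod.fst h2
        subst e1 e2; exact ⟨h1, h2⟩
      · have e1 : a = b' := congrArg Prod.fst h1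
        have e2 : b = a' := congrArg Prod.fst h2
        subst e1 e2; exact ⟨h1, h2⟩
    obtain ⟨rfl, rfl, rfl, rfl⟩ := hinj a b hab.ne _ _ _ _ _ _ _ _ key.1 key.2
    rfl
  · rintro ⟨a, p, u⟩
    rw [Nat.card_eq_fintype_card]
    have hcard : Fintype.card (α × (Fin d → ZMod m) × ZMod t) = Fintype.card α * (m ^ d * t) := by
      simp [ZMod.card]
    rw [hcard]
    refine hε.trans ?_
    have : S.card * t = (S ×ˢ (Finset.univ : Finset (ZMod t))).card := by
      rw [Finset.card_product, Finset.card_univ, ZMod.card]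
    norm_cast
    rw [this, ← Set.ncard_coe_finset]
    apply Set.ncard_le_ncard_of_injOn (fun w => RSmap c m t
      (fun i => p i - (c a : ZMod m) * ((w.1 i).val : ZMod m)) w.1 (u - (c a : ZMod t) * w.2) w.2)
    · rintro ⟨s, z⟩ hw
      have hs : s ∈ S := by simpa using hw
      refine ⟨⟨_, s, hs, _, _, rfl⟩, a, ?_⟩
      simp [RSmap]
    · rintro ⟨s, z⟩ - ⟨s', z'⟩ - heq
      obtain ⟨b, hb⟩ := hα a
      have := hinj a b hb _ _ _ _ _ _ _ _ (congrFun heq a) (congrFun heq b)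
      simp only [Prod.mk.injEq]
      exact ⟨this.2.1, this.2.2.2⟩

lemma RS_few {α : Type*} [Fintype α] (F : SimpleGraph α) (c : α → ℤ) (B : ℕ)
    (hB : ∀ a b, |c a - c b| ≤ B) (L : ℕ) (hL : 2 ≤ L)
    (σ : SimpleGraph.cycleGraph (L + 1) →g F) (i₀ : Fin (L + 1))
    (hi : ∀ j, j ≠ i₀ → 0 < c (σ (j + 1)) - c (σ j))
    (d r m t R : ℕ) [NeZero m] [NeZero t] (hB0 : 0 < B) (hr : 0 < r) (hm : (L + 1) * (B * r) ≤ m)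
    (S : Finset (Fin d → Fin r)) (hS : ∀ s ∈ S, ∑ i, (s i).val ^ 2 = R) :
    ({f : Fin (L + 1) → (α × (Fin d → ZMod m) × ZMod t) |
      (∀ x y, (SimpleGraph.cycleGraph (L + 1)).Adj x y → (RSgraph F c d r m t S).Adj (f x) (f y)) ∧
        ∀ v, RSpi F c d r m t S (f v) = σ v}).ncard ≤ m ^ d * (r ^ d * t ^ (L + 1)) := by
  classical
  set Hom := {f : Fin (L + 1) → (α × (Fin d → ZMod m) × ZMod t) |
      (∀ x y, (SimpleGraph.cycleGraph (L + 1)).Adj x y → (RSgraph F c d r m t S).Adj (f x) (f y)) ∧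
        ∀ v, RSpi F c d r m t S (f v) = σ v} with hHom
  have key : ∀ f : Fin (L + 1) → (α × (Fin d → ZMod m) × ZMod t), ∃ s : Fin d → Fin r, f ∈ Hom →
      ∀ x i, (f (x + 1)).2.1 i = (f x).2.1 i + ((c (σ (x + 1)) - c (σ x) : ℤ) : ZMod m) * ((s i).val : ZMod m) := by
    intro f
    by_cases hf : f ∈ Hom
    swap
    · exact ⟨fun _ => ⟨0, hr⟩, fun h => absurd h hf⟩
    obtain ⟨hadj, hcol⟩ := hf
    have hc1 : ∀ v, (f v).1 = σ v := hcol
    have h1 : ∀ x, ∃ s ∈ S, ∀ i, (f (x + 1)).2.1 i - (f x).2.1 i =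
        ((c (σ (x + 1)) - c (σ x) : ℤ) : ZMod m) * ((s i).val : ZMod m) := by
      intro x
      obtain ⟨-, s, hs, h⟩ := hadj x (x + 1) (cyc_adj (by omega) x)
      rw [hc1, hc1] at h
      exact ⟨s, hs, h⟩
    choose s hs hs2 using h1
    have heq : ∀ i, ∑ j, (c (σ (j + 1)) - c (σ j)) * ((s j i).val : ℤ) = 0 := by
      intro i
      apply zmod_zero (m := m)
      · have e1 : ∑ j, ((f (j + 1)).2.1 i - (f j).2.1 i) = 0 := by
          rw [Finset.sum_sub_distrib, sub_eq_zero]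
          exact Equiv.sum_comp (Equiv.addRight (1 : Fin (L + 1))) (fun j => (f j).2.1 i)
        simp_rw [hs2] at e1
        rw [← e1]
        push_cast
        rfl
      · have hb : ∀ j : Fin (L + 1), |(c (σ (j + 1)) - c (σ j)) * ((s j i).val : ℤ)| < B * r := by
          intro j
          rw [abs_mul, Nat.abs_cast]
          have g1 := hB (σ (j + 1)) (σ j)
          have g2 : ((s j i).val : ℤ) < r := by exact_mod_cast (s j i).isLt
          calc _ ≤ (B : ℤ) * ((s j i).val : ℤ) := by gcongr
            _ < B * r := by
              have : (0 : ℤ) < B := by exact_mod_cast hB0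
              gcongr
        calc _ ≤ ∑ j, |(c (σ (j + 1)) - c (σ j)) * ((s j i).val : ℤ)| := Finset.abs_sum_le_sum_abs _ _
          _ < ∑ _j : Fin (L + 1), ((B : ℤ) * r) := by
            apply Finset.sum_lt_sum_of_nonempty ⟨0, Finset.mem_univ _⟩
            intro j _; exact hb j
          _ ≤ m := by simp; exact_mod_cast hm
    have hall := C_convex (fun j => c (σ (j + 1)) - c (σ j)) i₀ hi (A_total (L + 1) σ c)
      (fun j i => ((s j i).val : ℤ)) R (by intro j; exact_mod_cast hS _ (hs j)) heq
    refine ⟨s i₀, fun _ x i => ?_⟩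
    have e1 : (s x i).val = (s i₀ i).val := by
      have := congrFun (hall x) i
      simpa using this
    rw [← e1]
    linear_combination hs2 x i
  choose s hs using key
  have hle : Hom.ncard ≤ (Set.univ : Set ((Fin d → ZMod m) × (Fin d → Fin r) × (Fin (L + 1) → ZMod t))).ncard := by
    apply Set.ncard_le_ncard_of_injOn (fun f => ((f 0).2.1, s f, fun x => (f x).2.2))
    · intro f _; trivial
    · intro f hf g hg hfg
      simp only [Prod.mk.injEq] at hfg
      obtain ⟨h0, h1, h2⟩ := hfg
      have hk : ∀ k : ℕ, (f (k : Fin (L + 1))).2.1 = (g (k : Fin (L + 1))).2.1 := by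
        intro k
        induction k with
        | zero => simpa using h0
        | succ k ih =>
          funext i
          push_cast
          rw [hs f hf, hs g hg, h1, ih]
      funext x
      refine Prod.ext ?_ (Prod.ext ?_ (congrFun h2 x))
      · exact (hf.2 x).trans (hg.2 x).symm
      · have := hk x.val
        rwa [Fin.cast_val_eq_self] at this
  refine hle.trans (le_of_eq ?_)
  rw [Set.ncard_univ, Nat.card_eq_fintype_card]
  simp [ZMod.card]


lemma C_num (c0 : ℝ) (h0 : 0 < c0) (C K : ℕ) (hK : 2 ≤ K) (A : ℝ) (hA : 0 < A) :
    ∃ d : ℕ, 0 < d ∧ A * (d : ℝ) ^ C < c0 * (K : ℝ) ^ d := by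
  have hK1 : (1 : ℝ) < K := by exact_mod_cast (by omega : 1 < K)
  have h := tendsto_pow_const_div_const_pow_of_one_lt C hK1
  have h2 : ∀ᶠ d : ℕ in Filter.atTop, (d : ℝ) ^ C / (K : ℝ) ^ d < c0 / A :=
    h.eventually (gt_mem_nhds (by positivity))
  obtain ⟨d, hd, hd0⟩ := (h2.and (Filter.eventually_gt_atTop 0)).exists
  refine ⟨d, hd0, ?_⟩
  rw [div_lt_div_iff₀ (by positivity) hA] at hd
  linarith

lemma C_real (c0 ε k K r s d m t : ℝ) (C D L : ℕ) (h0 : 0 < c0) (hk : 1 ≤ k) (hK : 1 ≤ K) (hr : r = K ^ C)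
    (hm : m = K * r) (hL : 2 ≤ L) (hd : 0 < d) (ht : 0 < t) (hs : r ^ D ≤ s * (d * r ^ 2))
    (hε : ε = s / (k * m ^ D))
    (h : c0 * ε ^ C * (k * (m ^ D * t)) ^ (L + 1) ≤ m ^ D * (r ^ D * t ^ (L + 1))) :
    c0 * K ^ D ≤ (k ^ C * (K ^ C) ^ (2 * C)) * d ^ C := by
  have hK0 : 0 < K := by linarith
  have hr0 : 1 ≤ r := by rw [hr]; exact one_le_pow₀ hK
  have hm0 : 1 ≤ m := by rw [hm]; nlinarith
  have hM : 1 ≤ m ^ D := one_le_pow₀ hm0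
  have hrm : r ^ D ≤ m ^ D := by
    apply pow_le_pow_left₀ (by linarith)
    rw [hm]; nlinarith
  have hε1 : 1 / (d * r ^ 2 * k * K ^ D) ≤ ε := by
    rw [hε, div_le_div_iff₀ (by positivity) (by positivity), hm, mul_pow]
    have : 0 ≤ k * K ^ D := by positivity
    nlinarith [mul_le_mul_of_nonneg_right hs this]
  have hε0 : 0 < ε := lt_of_lt_of_le (by positivity) hε1
  have h1 : c0 * ε ^ C * m ^ D ≤ 1 := by
    have e1 : (m ^ D) ^ 3 * t ^ (L + 1) ≤ (k * (m ^ D * t)) ^ (L + 1) := by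
      rw [mul_pow, mul_pow]
      have a1 : 1 ≤ k ^ (L + 1) := one_le_pow₀ hk
      have a2 : (m ^ D) ^ 3 ≤ (m ^ D) ^ (L + 1) := pow_le_pow_right₀ hM (by omega)
      have a3 : (m ^ D) ^ 3 * t ^ (L + 1) ≤ (m ^ D) ^ (L + 1) * t ^ (L + 1) := by gcongr
      have a4 : 0 ≤ (m ^ D) ^ (L + 1) * t ^ (L + 1) := by positivity
      nlinarith
    have e2 : c0 * ε ^ C * ((m ^ D) ^ 3 * t ^ (L + 1)) ≤ m ^ D * (m ^ D * t ^ (L + 1)) := by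
      calc _ ≤ c0 * ε ^ C * (k * (m ^ D * t)) ^ (L + 1) := by gcongr
        _ ≤ _ := h
        _ ≤ _ := by gcongr
    have e3 : (c0 * ε ^ C * m ^ D) * ((m ^ D) ^ 2 * t ^ (L + 1)) ≤ 1 * ((m ^ D) ^ 2 * t ^ (L + 1)) := by
      linarith
    exact le_of_mul_le_mul_right e3 (by positivity)
  have h2 : c0 * (1 / (d * r ^ 2 * k * K ^ D)) ^ C * m ^ D ≤ 1 := by
    refine le_trans ?_ h1
    gcongr
  rw [one_div, inv_pow, mul_assoc, mul_comm (_⁻¹), ← mul_assoc, ← div_eq_mul_inv,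
    div_le_one (by positivity)] at h2
  rw [hm, mul_pow, mul_pow, mul_pow, mul_pow, ← pow_mul K D C, mul_comm D C, pow_mul K C D, ← hr] at h2
  have hrD : 0 < r ^ D := by positivity
  rw [← hr, pow_mul]
  have : (c0 * K ^ D) * r ^ D ≤ (k ^ C * (r ^ 2) ^ C * d ^ C) * r ^ D := by linarith
  exact le_of_mul_le_mul_right this hrD

lemma C_main {α : Type*} [Fintype α] (F : SimpleGraph α) (ℓ : ℕ) [NeZero ℓ] (hℓ : 3 ≤ ℓ)
    (σ : SimpleGraph.cycleGraph ℓ →g F) (hσ : Function.Injective σ) :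
    ¬ ColouredAbundant F (SimpleGraph.cycleGraph ℓ) σ := by
  classical
  obtain ⟨L, rfl⟩ : ∃ k, ℓ = k + 1 := ⟨ℓ - 1, by omega⟩
  obtain ⟨c, hc, i₀, -, hi⟩ := A_conv F (L + 1) hℓ σ hσ
  have hi' : ∀ j, j ≠ i₀ → 0 < c (σ (j + 1)) - c (σ j) := fun j hj =>
    lt_of_le_of_ne (hi j hj) (A_pos F (L + 1) hℓ σ c hc j).symm
  rintro ⟨c0, C0, hc0, hC0, hab⟩
  obtain ⟨B, hB0, hB⟩ : ∃ B : ℕ, 0 < B ∧ ∀ a b, |c a - c b| ≤ B := by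
    refine ⟨2 * (∑ a, (c a).natAbs) + 1, by omega, fun a b => ?_⟩
    have h1 := Finset.single_le_sum (f := fun a => (c a).natAbs) (fun _ _ => Nat.zero_le _) (Finset.mem_univ a)
    have h2 := Finset.single_le_sum (f := fun a => (c a).natAbs) (fun _ _ => Nat.zero_le _) (Finset.mem_univ b)
    rw [abs_le]
    omega
  have hα : ∀ a : α, ∃ b, a ≠ b := by
    intro a
    by_contra hcon
    push Not at hcon
    have h1 := hσ ((hcon (σ i₀)).symm.trans (hcon (σ (i₀ + 1))))
    have := σ.map_adj (cyc_adj hℓ i₀)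
    exact this.ne (congrArg σ h1)
  set k := Fintype.card α with hk
  have hk1 : 1 ≤ k := Fintype.card_pos_iff.mpr ⟨σ i₀⟩
  obtain ⟨C, hC⟩ : ∃ C : ℕ, C0 ≤ C := exists_nat_ge C0
  set K := (L + 1) * B with hKdef
  have hK : 2 ≤ K := by
    have : L + 1 ≤ K := Nat.le_mul_of_pos_right _ hB0
    omega
  obtain ⟨d, hd, hlt⟩ := C_num c0 hc0 C K hK ((k : ℝ) ^ C * ((K : ℝ) ^ C) ^ (2 * C)) (by positivity)
  set r := K ^ C with hr
  have hr0 : 0 < r := by positivity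
  set m := K * r with hm
  have hm0 : 0 < m := by positivity
  haveI : NeZero m := ⟨hm0.ne'⟩
  obtain ⟨R, S, hS, hcard⟩ := C_sphere d r hd hr0
  have hS0 : 0 < S.card := by
    by_contra h
    have : S.card = 0 := by omega
    rw [this, zero_mul] at hcard
    have : 0 < r ^ d := by positivity
    omega
  have hSr : S.card ≤ r ^ d := by
    simpa using Finset.card_le_univ S
  have hrm : r ^ d < m ^ d := Nat.pow_lt_pow_left (by nlinarith) hd.ne'
  have hSm : S.card < k * m ^ d := by nlinarith
  set ε : ℝ := S.card / (k * (m : ℝ) ^ d) with hε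
  have hε0 : 0 < ε := by positivity
  have hε1 : ε < 1 := by
    rw [hε, div_lt_one (by positivity)]
    exact_mod_cast hSm
  obtain ⟨n₀, hn₀⟩ := hab ε hε0 hε1
  obtain ⟨t, htge, htp⟩ := Nat.exists_infinite_primes (B + n₀ + 1)
  haveI : Fact t.Prime := ⟨htp⟩
  have ht0 : 0 < t := htp.pos
  have hmd : 0 < m ^ d := by positivity
  have hn : n₀ ≤ k * (m ^ d * t) := by
    calc n₀ ≤ t := by omega
      _ ≤ m ^ d * t := Nat.le_mul_of_pos_left _ hmd
      _ ≤ _ := Nat.le_mul_of_pos_left _ hk1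
  have hBr : B * r ≤ m := by
    rw [hm, hKdef]
    exact Nat.mul_le_mul_right _ (Nat.le_mul_of_pos_left _ (by omega))
  have hfar := RS_far F c hc B hB hα d r m t hBr (by omega) S ε (by
    rw [← hk, hε]
    push_cast
    rw [div_mul_eq_mul_div, div_le_iff₀ (by positivity)]
    exact le_of_eq (by ring))
  have h1 := C_transfer F (SimpleGraph.cycleGraph (L + 1)) σ _ ε _ (hn₀ _ hn)
    (by simp [ZMod.card, hk]) _ _ hfar
  have h2 := RS_few F c B hB L (by omega) σ i₀ hi' d r m t R hB0 hr0
    (by rw [hm, hKdef, mul_assoc]) S hS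
  have h3 := h1.trans (Nat.cast_le (α := ℝ).mpr h2)
  rw [Nat.card_eq_fintype_card, Fintype.card_fin] at h3
  have h4 : ε ^ C ≤ ε ^ C0 := by
    rw [← Real.rpow_natCast]
    exact Real.rpow_le_rpow_of_exponent_ge hε0 hε1.le hC
  push_cast at h3
  have h5 : c0 * ε ^ C * ((k : ℝ) * ((m : ℝ) ^ d * t)) ^ (L + 1) ≤ (m : ℝ) ^ d * ((r : ℝ) ^ d * (t : ℝ) ^ (L + 1)) := by
    refine le_trans ?_ h3
    gcongr
  have h6 := C_real c0 ε k K r S.card d m t C d L hc0 (by exact_mod_cast hk1)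
    (by exact_mod_cast (by omega : 1 ≤ K)) (by rw [hr]; push_cast; rfl) (by rw [hm]; push_cast; rfl)
    (by omega) (by exact_mod_cast hd) (by exact_mod_cast ht0) (by exact_mod_cast hcard) hε h5
  linarith


end MyProof

/-- Let `(C, σ)` be an `F`-coloured cycle of length `ℓ ≥ 3`
(the cycle `cycleGraph ℓ` on `Fin ℓ`, with edges `{i, i+1}`).  For an injection
`c : V(F) → ℤ`, the cycle-equation of `C` has coefficient `c(σ(i+1)) − c(σ(i))`
on the edge `{i, i+1}` (these coefficients are nonzero and sum to zero).  Then the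
following are equivalent: (1) `(C, σ)` is `F`-abundant as a coloured graph;
(2) for every injection `c`, the cycle-equation is not convex (i.e. it is not the
case that exactly one coefficient is negative and all others nonnegative); (3) for
every injection `c`, the cycle-equation has genus at least 2 (here expressed as the
existence of a partition of the index set into two nonempty parts, each with zero
coefficient sum, which is equivalent). -/
theorem stmt_17 {α : Type*} [Fintype α] (F : SimpleGraph α)
    (ℓ : ℕ) [NeZero ℓ] (hℓ : 3 ≤ ℓ)
    (σ : SimpleGraph.cycleGraph ℓ →g F) :
    (ColouredAbundant F (SimpleGraph.cycleGraph ℓ) σ ↔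
      ∀ c : α → ℤ, Function.Injective c →
        ¬ ∃ i₀ : Fin ℓ, (c (σ (i₀ + 1)) - c (σ i₀) < 0) ∧
          ∀ j : Fin ℓ, j ≠ i₀ → 0 ≤ c (σ (j + 1)) - c (σ j)) ∧
    ((∀ c : α → ℤ, Function.Injective c →
      ¬ ∃ i₀ : Fin ℓ, (c (σ (i₀ + 1)) - c (σ i₀) < 0) ∧
        ∀ j : Fin ℓ, j ≠ i₀ → 0 ≤ c (σ (j + 1)) - c (σ j)) ↔
      ∀ c : α → ℤ, Function.Injective c →
        ∃ T : Finset (Fin ℓ), T.Nonempty ∧ Tᶜ.Nonempty ∧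
          ∑ i ∈ T, (c (σ (i + 1)) - c (σ i)) = 0 ∧
          ∑ i ∈ Tᶜ, (c (σ (i + 1)) - c (σ i)) = 0) := by
  obtain ⟨h2, h3⟩ := A_all F ℓ hℓ σ
  exact ⟨⟨fun h => h2.mpr (fun hi => C_main F ℓ hℓ σ hi h), fun h => B_main F ℓ hℓ σ (h2.mp h)⟩,
    h2.trans h3.symm⟩
end

section
/- Let (H, σ) be a K₃-coloured graph, i.e., H is a graph and σ : V(H) → ℤ/3 assigns distinct colours to adjacent vertices. Then the following are equivalent: (1) for every injection c : ℤ/3 → ℤ and every cycle of H, the cycle-equation of that cycle with respect to σ and c is symmetric; (2) there is a colour homomorphism from (H, σ) to P∞³, i.e., a graph homomorphism γ from H to the infinite path on vertex set ℤ (with n adjacent to n+1) such that γ(v) mod 3 = σ(v) for every vertex v of H. -/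
namespace S18

def st (a b : ZMod 3) : ℤ := if b = a + 1 then 1 else if a = b + 1 then -1 else 0

lemma st_anti (a b : ZMod 3) : st a b = - st b a := by revert a b; decide
lemma st_cast (a b : ZMod 3) : ((st a b : ℤ) : ZMod 3) = b - a := by revert a b; decide
lemma st_ne (a b : ZMod 3) (h : a ≠ b) : st a b = 1 ∨ st a b = -1 := by revert a b; decide

variable {β : Type*} {H : SimpleGraph β}

def S (σ : β → ZMod 3) {u v : β} (w : H.Walk u v) : ℤ :=
  (w.darts.map (fun d => st (σ d.toProd.1) (σ d.toProd.2))).sum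

lemma S_nil (σ : β → ZMod 3) (u : β) : S σ (SimpleGraph.Walk.nil : H.Walk u u) = 0 := by simp [S]
lemma S_cons (σ : β → ZMod 3) {u v w : β} (h : H.Adj u v) (p : H.Walk v w) :
    S σ (SimpleGraph.Walk.cons h p) = st (σ u) (σ v) + S σ p := by simp [S]
lemma S_append (σ : β → ZMod 3) {u v w : β} (p : H.Walk u v) (q : H.Walk v w) :
    S σ (p.append q) = S σ p + S σ q := by simp [S]
lemma S_reverse (σ : β → ZMod 3) {u v : β} (p : H.Walk u v) : S σ p.reverse = - S σ p := by
  induction p with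
  | nil => simp [S_nil]
  | cons h p ih =>
    rw [SimpleGraph.Walk.reverse_cons, S_append, S_cons, S_cons, S_nil, ih, st_anti]; ring
lemma S_cast (σ : β → ZMod 3) {u v : β} (p : H.Walk u v) : ((S σ p : ℤ) : ZMod 3) = σ v - σ u := by
  induction p with
  | nil => simp [S_nil]
  | cons h p ih => rw [S_cons]; push_cast; rw [ih, st_cast]; ring

lemma path_edge (σ : β → ZMod 3) {u v : β} (h : H.Adj u v) (p : H.Walk v u) (hp : p.IsPath)
    (he : s(u, v) ∈ p.edges) : S σ p = st (σ v) (σ u) := by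
  cases p with
  | nil => exact absurd h (H.irrefl)
  | cons h' q =>
    rename_i x
    rw [SimpleGraph.Walk.cons_isPath_iff] at hp
    rw [SimpleGraph.Walk.edges_cons, List.mem_cons] at he
    rcases he with he | he
    · have hx : u = x := by
        rcases Sym2.eq_iff.1 he with ⟨a, _⟩ | ⟨a, _⟩
        · exact absurd a h.ne
        · exact a
      subst hx
      have := (SimpleGraph.Walk.isPath_iff_eq_nil).1 hp.1
      subst this
      rw [S_cons, S_nil, add_zero]
    · exact absurd (q.snd_mem_support_of_mem_edges he) hp.2

lemma S_bypass [DecidableEq β] (σ : β → ZMod 3)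
    (hc : ∀ (v : β) (w : H.Walk v v), w.IsCycle → S σ w = 0) {u v : β} (p : H.Walk u v) :
    S σ p.bypass = S σ p := by
  induction p with
  | nil => rfl
  | @cons u v w h p ih =>
    rw [S_cons, ← ih, SimpleGraph.Walk.bypass]
    split_ifs with hu
    · have e := congrArg (S σ) (p.bypass.take_spec hu)
      rw [S_append] at e
      have hp : (p.bypass.takeUntil u hu).IsPath := (p.bypass_isPath).takeUntil hu
      have : st (σ u) (σ v) + S σ (p.bypass.takeUntil u hu) = 0 := by
        by_cases he : s(u, v) ∈ (p.bypass.takeUntil u hu).edges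
        · rw [path_edge σ h _ hp he, st_anti]; ring
        · rw [← S_cons σ h]
          exact hc _ _ ((SimpleGraph.Walk.cons_isCycle_iff _ h).2 ⟨hp, he⟩)
      linarith
    · rw [S_cons]

lemma S_closed (σ : β → ZMod 3)
    (hc : ∀ (v : β) (w : H.Walk v v), w.IsCycle → S σ w = 0) {u : β} (p : H.Walk u u) :
    S σ p = 0 := by
  classical
  rw [← S_bypass σ hc, (SimpleGraph.Walk.isPath_iff_eq_nil).1 p.bypass_isPath, S_nil]

def c0 : ZMod 3 → ℤ := fun a => if a = 0 then 0 else if a = 1 then 1 else 3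

lemma c0_inj : Function.Injective c0 := by unfold Function.Injective; decide

lemma S_count (σ : β → ZMod 3) {u v : β} (p : H.Walk u v) (L : List ℤ)
    (hL : L = p.darts.map (fun d => c0 (σ d.toProd.2) - c0 (σ d.toProd.1))) :
    S σ p = (L.count 1 : ℤ) - L.count (-1) + (L.count 2 - L.count (-2))
      - (L.count 3 - L.count (-3)) := by
  subst hL
  induction p with
  | nil => simp [S_nil]
  | @cons u v w h p ih =>
    rw [S_cons, ih]
    simp only [SimpleGraph.Walk.darts_cons, List.map_cons, List.count_cons]
    generalize σ u = a
    generalize σ v = b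
    have : st a b = (if (c0 b - c0 a == 1) = true then (1:ℤ) else 0)
      - (if (c0 b - c0 a == -1) = true then 1 else 0)
      + ((if (c0 b - c0 a == 2) = true then 1 else 0)
      - (if (c0 b - c0 a == -2) = true then 1 else 0))
      - ((if (c0 b - c0 a == 3) = true then 1 else 0)
      - (if (c0 b - c0 a == -3) = true then 1 else 0)) := by
      revert a b; decide
    rw [this]
    push_cast
    ring

def G (c : ZMod 3 → ℤ) (t g : ℤ) : ℤ :=
  let e := fun a b : ZMod 3 => (if c b - c a = t then (1:ℤ) else 0) - (if c b - c a = -t then 1 else 0)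
  (g + 2) / 3 * e 0 1 + (g + 1) / 3 * e 1 2 + g / 3 * e 2 0

lemma G_step (c : ZMod 3 → ℤ) (t g : ℤ) : G c t (g + 1) - G c t g =
    (if c ((g + 1 : ℤ) : ZMod 3) - c (g : ZMod 3) = t then (1:ℤ) else 0)
     - (if c ((g + 1 : ℤ) : ZMod 3) - c (g : ZMod 3) = -t then 1 else 0) := by
  obtain ⟨k, hk⟩ : ∃ k, g = 3 * k ∨ g = 3 * k + 1 ∨ g = 3 * k + 2 := ⟨g / 3, by omega⟩
  have h3 : (3 : ZMod 3) = 0 := by decide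
  have h11 : (1 + 1 : ZMod 3) = 2 := by decide
  have h21 : (2 + 1 : ZMod 3) = 0 := by decide
  rcases hk with rfl | rfl | rfl
  · have e1 : (3 * k + 1 + 2) / 3 = k + 1 := by omega
    have e2 : (3 * k + 1 + 1) / 3 = k := by omega
    have e3 : (3 * k + 1) / 3 = k := by omega
    have e4 : (3 * k + 2) / 3 = k := by omega
    have e5 : (3 * k) / 3 = k := by omega
    simp only [G, e1, e2, e3, e4, e5]
    push_cast
    simp only [h3, zero_mul, zero_add]
    ring
  · have e1 : (3 * k + 1 + 1 + 2) / 3 = k + 1 := by omega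
    have e2 : (3 * k + 1 + 1 + 1) / 3 = k + 1 := by omega
    have e3 : (3 * k + 1 + 1) / 3 = k := by omega
    have e4 : (3 * k + 1 + 2) / 3 = k + 1 := by omega
    have e5 : (3 * k + 1) / 3 = k := by omega
    simp only [G, e1, e2, e3, e4, e5]
    push_cast
    simp only [h3, zero_mul, zero_add, h11]
    ring
  · have e1 : (3 * k + 2 + 1 + 2) / 3 = k + 1 := by omega
    have e2 : (3 * k + 2 + 1 + 1) / 3 = k + 1 := by omega
    have e3 : (3 * k + 2 + 1) / 3 = k + 1 := by omega
    have e4 : (3 * k + 2 + 2) / 3 = k + 1 := by omega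
    have e5 : (3 * k + 2) / 3 = k := by omega
    simp only [G, e1, e2, e3, e4, e5]
    push_cast
    simp only [h3, zero_mul, zero_add, h21]
    ring

lemma G_adj (c : ZMod 3 → ℤ) (t g g' : ℤ) (h : g - g' = 1 ∨ g' - g = 1) :
    G c t g' - G c t g =
    (if c (g' : ZMod 3) - c (g : ZMod 3) = t then (1:ℤ) else 0)
     - (if c (g' : ZMod 3) - c (g : ZMod 3) = -t then 1 else 0) := by
  rcases h with h | h
  · obtain rfl : g = g' + 1 := by omega
    have := G_step c t g'
    rw [← neg_sub, this]
    generalize c ((g' + 1 : ℤ) : ZMod 3) = x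
    generalize c (g' : ZMod 3) = y
    have h1 : (x - y = t) ↔ (y - x = -t) := by omega
    have h2 : (x - y = -t) ↔ (y - x = t) := by omega
    simp only [h1, h2]
    ring
  · obtain rfl : g' = g + 1 := by omega
    exact G_step c t g

lemma G_walk (σ : β → ZMod 3) (γ : β → ℤ)
    (h1 : ∀ x y, H.Adj x y → γ x - γ y = 1 ∨ γ y - γ x = 1)
    (h2 : ∀ v, ((γ v : ZMod 3) = σ v)) (c : ZMod 3 → ℤ) (t : ℤ) {u v : β} (w : H.Walk u v) :
    ((w.darts.map (fun d => c (σ d.toProd.2) - c (σ d.toProd.1))).count t : ℤ) -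
        (w.darts.map (fun d => c (σ d.toProd.2) - c (σ d.toProd.1))).count (-t)
      = G c t (γ v) - G c t (γ u) := by
  induction w with
  | nil => simp
  | @cons u v w h p ih =>
    have := G_adj c t _ _ (h1 u v h)
    rw [h2, h2] at this
    simp only [SimpleGraph.Walk.darts_cons, List.map_cons, List.count_cons, beq_iff_eq]
    push_cast
    linarith

end S18

/-- Let `(H, σ)` be a `K₃`-coloured graph (`σ : V(H) → ℤ/3` with
adjacent vertices receiving distinct colours).  The following are equivalent:
(1) for every injection `c : ℤ/3 → ℤ` and every cycle of `H`, the cycle-equation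
(whose list of coefficients is `c(σ(v_{i+1})) − c(σ(v_i))` over the darts of the
cycle) is symmetric, i.e. for every integer `t` the number of coefficients equal to `t`
equals the number of coefficients equal to `−t`;
(2) there is a colour homomorphism from `(H, σ)` to `P∞³`: a map `γ : V(H) → ℤ` with
`|γ(x) − γ(y)| = 1` for every edge `xy` of `H` and `γ(v) ≡ σ(v) (mod 3)` for every
vertex `v`. -/
theorem stmt_18 {β : Type*} (H : SimpleGraph β) (σ : β → ZMod 3)
    (hσ : ∀ x y, H.Adj x y → σ x ≠ σ y) :
    (∀ c : ZMod 3 → ℤ, Function.Injective c →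
      ∀ (v : β) (w : H.Walk v v), w.IsCycle → ∀ t : ℤ,
        (w.darts.map (fun d => c (σ d.toProd.2) - c (σ d.toProd.1))).count t =
        (w.darts.map (fun d => c (σ d.toProd.2) - c (σ d.toProd.1))).count (-t)) ↔
    (∃ γ : β → ℤ,
      (∀ x y, H.Adj x y → γ x - γ y = 1 ∨ γ y - γ x = 1) ∧
      ∀ v, ((γ v : ZMod 3) = σ v)) := by
  constructor
  · intro h
    have hc : ∀ (v : β) (w : H.Walk v v), w.IsCycle → S18.S σ w = 0 := by
      intro v w hw
      have := h S18.c0 S18.c0_inj v w hw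
      rw [S18.S_count σ w _ rfl, this 1, this 2, this 3]
      ring
    have hr : ∀ v, H.Reachable (H.connectedComponentMk v).out v := fun v =>
      SimpleGraph.ConnectedComponent.exact (Quot.out_eq (H.connectedComponentMk v))
    have key : ∀ (r v : β), ∃ n : ℤ, ∀ p : H.Walk r v, S18.S σ p = n := by
      intro r v
      by_cases hv : H.Reachable r v
      · obtain ⟨q⟩ := hv
        refine ⟨S18.S σ q, fun p => ?_⟩
        have := S18.S_closed σ hc (p.append q.reverse)
        rw [S18.S_append, S18.S_reverse] at this
        linarith
      · exact ⟨0, fun p => absurd ⟨p⟩ hv⟩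
    choose D hD using key
    refine ⟨fun v => D (H.connectedComponentMk v).out v
      + ((σ (H.connectedComponentMk v).out).val : ℤ), ?_, ?_⟩
    · intro x y hxy
      have e : H.connectedComponentMk x = H.connectedComponentMk y :=
        SimpleGraph.ConnectedComponent.sound hxy.reachable
      obtain ⟨p⟩ := hr x
      have a1 := hD _ _ p
      have a2 := hD _ _ (p.append (SimpleGraph.Walk.cons hxy SimpleGraph.Walk.nil))
      rw [S18.S_append, S18.S_cons, S18.S_nil, a1] at a2
      dsimp only
      rw [← e, ← a2]
      rcases S18.st_ne _ _ (hσ x y hxy) with h1 | h1 <;> rw [h1]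
      · right; ring
      · left; ring
    · intro v
      obtain ⟨p⟩ := hr v
      dsimp only
      rw [← hD _ _ p]
      push_cast
      rw [S18.S_cast, ZMod.natCast_zmod_val]
      ring
  · rintro ⟨γ, h1, h2⟩ c - v w - t
    have := S18.G_walk σ γ h1 h2 c t w
    omega
end
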